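/- Let 1 ≤ p_0 ≤ q_0 ≤ ∞ and assume sup_{j≥0} 2^{jd/q_0} ‖𝒜_j‖_{L^{p_0}→L^{q_0}(L^{p_0})} ≤ C < ∞. Let q_0 ≤ q ≤ ∞ and define ρ_min(q) and ρ_max(q) by 1 − 1/ρ_min(q) = (q_0/q)(1 − 1/p_0) and 1/ρ_max(q) = (q_0/q)(1/p_0). If ρ_min(q) ≤ p ≤ q and 0 < r ≤ min{p, ρ_max(q)}, then sup_{j≥0} 2^{jd/q} ‖𝒜_j‖_{L^p→L^q(L^r)} < ∞. -/

import Mathlib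

/-!
Along the line `1/q = lam/q₀`, `lam = q₀/q`, the hypothesis is interpolated, by the three lines
theorem, with the bound `L^{1/u} → L^∞(L^{1/u})`, `0 ≤ u ≤ 1`, which is uniform in `j`. Schur's
test gives the latter: the kernel of `𝒜_j` has bounded `L¹` norm in `y`, and bounded `L¹` norm in
`t` because `∫∫ |K_j(x - t y)| dσ(y) dt` integrates `K_j` against a measure dominated by Lebesgue
measure. The weights match, `2^{-jd lam/q₀} = 2^{-jd/q}`, and the choice of `u` gives every inner
exponent `p` with `ρ_min ≤ p ≤ ρ_max`.

For `p > ρ_max` the inner exponent stays at `ρ_max`. The kernel of `𝒜_j` lives in `|x - y| ≲ 1` up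
to rapidly decaying tails of size `2^{-jd}`, so one may work on balls of bounded radius, where
Hölder's inequality raises the exponent of `f` from `ρ_max` to `p`. Smaller `r` come from Hölder's
inequality in `t`, which runs over a bounded interval.
-/

open MeasureTheory Metric Set
open scoped ENNReal NNReal FourierTransform

noncomputable section

/-- Euclidean `d`-space. -/
abbrev Euc (d : ℕ) : Type := EuclideanSpace ℝ (Fin d)

/-- The normalized surface measure `σ` on the unit sphere `S^{d-1} ⊆ ℝ^d`. -/
def sphereMeasure (d : ℕ) : Measure (Euc d) :=
  (((volume : Measure (Euc d)).toSphere Set.univ)⁻¹ : ℝ≥0∞) •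
    ((volume : Measure (Euc d)).toSphere.map Subtype.val)

/-- The spherical average `A_t f(x) = ∫_{S^{d-1}} f(x - t y) dσ(y)`. -/
def sphAvg {d : ℕ} (f : Euc d → ℂ) (t : ℝ) (x : Euc d) : ℂ :=
  ∫ y, f (x - t • y) ∂(sphereMeasure d)

/-- The dyadic symbols `β_j` built from the bump `β₀`:
`β_j(s) = β₀(2^{-j} s) - β₀(2^{1-j} s)` for `j ≥ 1`. -/
def betaJ (β₀ : ℝ → ℝ) : ℕ → ℝ → ℝ
  | 0 => β₀
  | (j + 1) => fun s => β₀ ((2 : ℝ) ^ (-(j + 1 : ℤ)) * s) - β₀ ((2 : ℝ) ^ (-(j : ℤ)) * s)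

/-- The frequency localization `L_j` with symbol `β_j(|ξ|)`. -/
def freqLoc (d : ℕ) (β₀ : ℝ → ℝ) (j : ℕ) (f : Euc d → ℂ) : Euc d → ℂ :=
  𝓕⁻ (fun ξ => (betaJ β₀ j ‖ξ‖ : ℂ) * 𝓕 f ξ)

/-- `χ` is an admissible time cutoff: smooth, `χ = 1` on a neighborhood of `[1,2]`,
supported in `[1/2,4]`. -/
def IsCutoff (χ : ℝ → ℝ) : Prop :=
  ContDiff ℝ (⊤ : ℕ∞) χ ∧ (∃ U : Set ℝ, IsOpen U ∧ Set.Icc 1 2 ⊆ U ∧ Set.EqOn χ 1 U) ∧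
    Function.support χ ⊆ Set.Icc (1 / 2 : ℝ) 4

/-- `β₀` is an admissible frequency bump: smooth, `β₀(s) = 1` for `|s| < 1/2` and
`β₀(s) = 0` for `|s| > 1`. -/
def IsBump (β₀ : ℝ → ℝ) : Prop :=
  ContDiff ℝ (⊤ : ℕ∞) β₀ ∧ (∀ s : ℝ, |s| < 1 / 2 → β₀ s = 1) ∧ ∀ s : ℝ, 1 < |s| → β₀ s = 0

/-- The frequency-localized operator `𝒜_j f(x,t) = χ(t) A_t L_j f(x)`. -/
def Aj (d : ℕ) (χ β₀ : ℝ → ℝ) (j : ℕ) (f : Euc d → ℂ) (x : Euc d) (t : ℝ) : ℂ :=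
  (χ t : ℂ) * sphAvg (freqLoc d β₀ j f) t x

/-- `L^q` norm (with respect to `μ`) of an `ℝ≥0∞`-valued function, `1 ≤ q ≤ ∞`. -/
def lqNorm {α : Type*} [MeasurableSpace α] (q : ℝ≥0∞) (g : α → ℝ≥0∞)
    (μ : Measure α) : ℝ≥0∞ :=
  if q = ∞ then essSup g μ else (∫⁻ x, g x ^ q.toReal ∂μ) ^ (1 / q.toReal)

/-- The mixed norm `‖F‖_{L^q(L^r)}` of `F : ℝ^d × ℝ → ℂ`. -/
def mixedNorm (d : ℕ) (q r : ℝ≥0∞) (F : Euc d → ℝ → ℂ) : ℝ≥0∞ :=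
  lqNorm q (fun x => lqNorm r (fun t => (‖F x t‖₊ : ℝ≥0∞)) volume) volume

/-- The operator norm `‖𝒜_j‖_{L^p → L^q(L^r)}`. -/
def AjOpNorm (d : ℕ) (χ β₀ : ℝ → ℝ) (j : ℕ) (p q r : ℝ≥0∞) : ℝ≥0∞ :=
  ⨆ (f : Euc d → ℂ) (_ : eLpNorm f p volume ≤ 1), mixedNorm d q r (Aj d χ β₀ j f)

section ThreeLines

variable {Ω : Type*} [MeasurableSpace Ω] {m : Measure Ω} {w : Ω → ℂ} {L L₀ L₁ : Ω → ℝ} {Λ : ℝ}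

lemma norm_cexp_mul_ofReal_le {z : ℂ} {l R : ℝ} (hz : |z.re| ≤ R) (hl : |l| ≤ Λ) :
    ‖Complex.exp (z * l)‖ ≤ Real.exp (R * Λ) := by
  rw [Complex.norm_exp, Complex.re_mul_ofReal, Real.exp_le_exp]
  calc z.re * l ≤ |z.re| * |l| := (le_abs_self _).trans (abs_mul _ _).le
    _ ≤ R * Λ := mul_le_mul hz hl (abs_nonneg _) ((abs_nonneg _).trans hz)

lemma differentiable_integral_mul_cexp (hw : Integrable w m) (hL : Measurable L)
    (hLΛ : ∀ ω, |L ω| ≤ Λ) :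
    Differentiable ℂ fun z : ℂ ↦ ∫ ω, w ω * Complex.exp (z * L ω) ∂m := by
  intro z₀
  have hre : ∀ z ∈ ball z₀ 1, |z.re| ≤ ‖z₀‖ + 1 := fun z hz ↦ by
    have := norm_le_norm_add_norm_sub' z z₀
    linarith [Complex.abs_re_le_norm z, mem_ball_iff_norm.1 hz]
  have hmeas (z : ℂ) : AEStronglyMeasurable (fun ω ↦ w ω * Complex.exp (z * L ω)) m :=
    hw.1.mul (by fun_prop)
  have hderiv := hasDerivAt_integral_of_dominated_loc_of_deriv_le (μ := m) (s := ball z₀ 1)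
    (F := fun z ω ↦ w ω * Complex.exp (z * L ω))
    (F' := fun z ω ↦ w ω * (Complex.exp (z * L ω) * L ω))
    (bound := fun ω ↦ ‖w ω‖ * (Real.exp ((‖z₀‖ + 1) * Λ) * Λ))
    (ball_mem_nhds _ one_pos) (.of_forall hmeas)
    ((hw.norm.mul_const (Real.exp ((‖z₀‖ + 1) * Λ))).mono' (hmeas z₀) (.of_forall fun ω ↦ ?_))
    (hw.1.mul (by fun_prop)) (.of_forall fun ω z hz ↦ ?_) (hw.norm.mul_const _)
    (.of_forall fun ω z _ ↦ ?_)
  · exact hderiv.2.differentiableAt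
  · rw [norm_mul]
    gcongr
    exact norm_cexp_mul_ofReal_le (hre z₀ (mem_ball_self one_pos)) (hLΛ ω)
  · rw [norm_mul, norm_mul, Complex.norm_real, Real.norm_eq_abs]
    gcongr
    exacts [norm_cexp_mul_ofReal_le (hre z hz) (hLΛ ω), hLΛ ω]
  · have hlin : HasDerivAt (fun z : ℂ ↦ z * (L ω : ℂ)) (L ω : ℂ) z := by
      simpa using (hasDerivAt_id z).mul_const (L ω : ℂ)
    exact hlin.cexp.const_mul _

lemma norm_integral_mul_cexp_le_of_lines (hw : Integrable w m) (hL : Measurable L)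
    (hLΛ : ∀ ω, |L ω| ≤ Λ) {a b : ℝ}
    (ha : ∀ z : ℂ, z.re = 0 → ‖∫ ω, w ω * Complex.exp (z * L ω) ∂m‖ ≤ a)
    (hb : ∀ z : ℂ, z.re = 1 → ‖∫ ω, w ω * Complex.exp (z * L ω) ∂m‖ ≤ b)
    {θ : ℝ} (hθ : θ ∈ Icc (0 : ℝ) 1) :
    ‖∫ ω, w ω * Complex.exp (θ * L ω) ∂m‖ ≤ a ^ (1 - θ) * b ^ θ := by
  have hbdd : BddAbove ((norm ∘ fun z : ℂ ↦ ∫ ω, w ω * Complex.exp (z * L ω) ∂m) ''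
      Complex.HadamardThreeLines.verticalClosedStrip 0 1) := by
    refine ⟨∫ ω, ‖w ω‖ * Real.exp (1 * Λ) ∂m, ?_⟩
    rintro _ ⟨z, hz : z.re ∈ Icc (0 : ℝ) 1, rfl⟩
    refine norm_integral_le_of_norm_le (hw.norm.mul_const _) (.of_forall fun ω ↦ ?_)
    rw [norm_mul]
    gcongr
    exact norm_cexp_mul_ofReal_le ((abs_of_nonneg hz.1).trans_le hz.2) (hLΛ ω)
  simpa using Complex.HadamardThreeLines.norm_le_interp_of_mem_verticalClosedStrip'
    (z := (θ : ℂ)) one_pos hθ (differentiable_integral_mul_cexp hw hL hLΛ).diffContOnCl hbdd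
    ha hb

lemma enorm_integral_mul_cexp_interp_le (hw : Integrable w m) (hL₀ : Measurable L₀)
    (hL₁ : Measurable L₁) (hΛ₀ : ∀ ω, |L₀ ω| ≤ Λ) (hΛ₁ : ∀ ω, |L₁ ω| ≤ Λ) {a b : ℝ≥0}
    (ha : ∀ z : ℂ, z.re = 0 →
      ‖∫ ω, w ω * Complex.exp ((1 - z) * L₀ ω + z * L₁ ω) ∂m‖ₑ ≤ a)
    (hb : ∀ z : ℂ, z.re = 1 →
      ‖∫ ω, w ω * Complex.exp ((1 - z) * L₀ ω + z * L₁ ω) ∂m‖ₑ ≤ b)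
    {θ : ℝ} (hθ : θ ∈ Icc (0 : ℝ) 1) :
    ‖∫ ω, w ω * Complex.exp ((1 - θ) * L₀ ω + θ * L₁ ω) ∂m‖ₑ ≤
      (a : ℝ≥0∞) ^ (1 - θ) * (b : ℝ≥0∞) ^ θ := by
  have hsplit (z : ℂ) (ω : Ω) : w ω * Complex.exp ((1 - z) * L₀ ω + z * L₁ ω) =
      w ω * Complex.exp (L₀ ω) * Complex.exp (z * ((L₁ ω - L₀ ω : ℝ) : ℂ)) := by
    rw [mul_assoc, ← Complex.exp_add]
    push_cast
    ring_nf
  have hw₀ : Integrable (fun ω ↦ w ω * Complex.exp (L₀ ω)) m := by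
    refine hw.mul_bdd (c := Real.exp (1 * Λ)) (by fun_prop) (.of_forall fun ω ↦ ?_)
    simpa using norm_cexp_mul_ofReal_le (z := 1) (R := 1) (by simp) (hΛ₀ ω)
  have hdiff (ω : Ω) : |L₁ ω - L₀ ω| ≤ Λ + Λ :=
    (abs_sub _ _).trans (add_le_add (hΛ₁ ω) (hΛ₀ ω))
  simp only [hsplit, enorm_le_coe] at ha hb ⊢
  have := norm_integral_mul_cexp_le_of_lines hw₀ (hL₁.sub hL₀) hdiff ha hb hθ
  rw [← ENNReal.coe_rpow_of_nonneg _ (sub_nonneg.2 hθ.2), ← ENNReal.coe_rpow_of_nonneg _ hθ.1,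
    ← ENNReal.coe_mul, enorm_le_coe]
  exact_mod_cast this

end ThreeLines

section KernelBounds

lemma mul_rpow_interp (k f g : ℝ≥0∞) {n : ℝ≥0∞} (hn : n ≠ 0) (hn' : n ≠ ∞) {p q u : ℝ}
    (hu : u ∈ Icc (0 : ℝ) 1) :
    k * (f ^ (p * u) * (g ^ (p * (1 - u)) * n ^ (q - p * (1 - u)))) =
      (k * (f ^ p * n ^ q)) ^ u * (k * (g ^ p * n ^ (q - p))) ^ (1 - u) := by
  have hu' : 0 ≤ 1 - u := sub_nonneg.2 hu.2
  have hk : k = k ^ u * k ^ (1 - u) := by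
    rw [← ENNReal.rpow_add_of_nonneg _ _ hu.1 hu', add_sub_cancel, ENNReal.rpow_one]
  have hn_split : n ^ (q - p * (1 - u)) = n ^ (q * u) * n ^ ((q - p) * (1 - u)) := by
    rw [← ENNReal.rpow_add _ _ hn hn']
    ring_nf
  simp only [ENNReal.mul_rpow_of_nonneg _ _ hu.1, ENNReal.mul_rpow_of_nonneg _ _ hu',
    ← ENNReal.rpow_mul]
  rw [hn_split]
  nth_rw 1 [hk]
  ring

variable {X τ Y Ω : Type*} [MeasurableSpace X] [MeasurableSpace τ] [MeasurableSpace Y]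
  [MeasurableSpace Ω] {μ : Measure X} {ν : Measure τ} {η : Measure Y} {ρ : Measure Ω} {M : ℝ≥0∞}

lemma lintegral_kernel_mul_le [SFinite η] {k : Ω × Y → ℝ≥0∞} (hk : Measurable k)
    (hM : ∀ ω, ∫⁻ y, k (ω, y) ∂η ≤ M) {g : Ω → ℝ≥0∞} (hg : Measurable g) :
    ∫⁻ z, k z * g z.1 ∂ρ.prod η ≤ M * ∫⁻ ω, g ω ∂ρ := by
  rw [lintegral_prod _ (by fun_prop), ← lintegral_const_mul _ hg]
  refine lintegral_mono fun ω ↦ ?_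
  dsimp only
  rw [lintegral_mul_const _ (by fun_prop)]
  gcongr
  exact hM ω

lemma lintegral_kernel_mul_mul_le [SFinite μ] [SFinite ν] [SFinite η]
    {k : (X × τ) × Y → ℝ≥0∞} (hk : Measurable k)
    (hM : ∀ x y, ∫⁻ t, k ((x, t), y) ∂ν ≤ M) {f : Y → ℝ≥0∞} (hf : Measurable f)
    {g : X → ℝ≥0∞} (hg : Measurable g) :
    ∫⁻ z, k z * (f z.2 * g z.1.1) ∂(μ.prod ν).prod η ≤ M * ((∫⁻ y, f y ∂η) * ∫⁻ x, g x ∂μ) := by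
  rw [lintegral_prod_symm _ (by fun_prop), ← lintegral_mul_const _ hf,
    ← lintegral_const_mul _ (by fun_prop)]
  refine lintegral_mono fun y ↦ ?_
  dsimp only
  rw [lintegral_prod _ (by fun_prop), ← lintegral_const_mul _ hg, ← lintegral_const_mul _
    (by fun_prop)]
  refine lintegral_mono fun x ↦ ?_
  dsimp only
  rw [lintegral_mul_const _ (by fun_prop)]
  gcongr
  exact hM x y

end KernelBounds

section DualFamily

variable {X τ : Type*} [MeasurableSpace X] [MeasurableSpace τ]

/-- A function `G` on `X × τ` with fibrewise `L^p` norms `N`, both of them bounded and bounded away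
from `0` where they do not vanish (recall `Real.log 0 = 0`), and living over a set of finite
measure. It provides extremizers, of the form `G |G|^a N^b`, for the duality of
`L^q(X; L^p(τ))`. -/
structure IsFiberNormed (μ : Measure X) (ν : Measure τ) (p Λ : ℝ) (G : X × τ → ℂ)
    (N : X → ℝ≥0) : Prop where
  measurable : Measurable G
  measurable_norm : Measurable N
  lintegral_fiber : ∀ x, ∫⁻ t, ‖G (x, t)‖ₑ ^ p ∂ν = (N x : ℝ≥0∞) ^ p
  eq_zero : ∀ x t, N x = 0 → G (x, t) = 0
  abs_log_le : ∀ ω, |Real.log ‖G ω‖| ≤ Λ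
  abs_log_norm_le : ∀ x, |Real.log (N x)| ≤ Λ
  measure_support_lt_top : μ (Function.support N) < ∞

namespace IsFiberNormed

variable {μ : Measure X} {ν : Measure τ} {p q Λ : ℝ} {G : X × τ → ℂ} {N : X → ℝ≥0}

lemma mono (hG : IsFiberNormed μ ν p Λ G N) {Λ' : ℝ} (hΛ : Λ ≤ Λ') :
    IsFiberNormed μ ν p Λ' G N :=
  { hG with
    abs_log_le := fun ω ↦ (hG.abs_log_le ω).trans hΛ
    abs_log_norm_le := fun x ↦ (hG.abs_log_norm_le x).trans hΛ }

lemma lintegral_rpow_lt_top (hG : IsFiberNormed μ ν p Λ G N) (hq : 0 < q) :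
    ∫⁻ x, (N x : ℝ≥0∞) ^ q ∂μ < ∞ := by
  have hbound (x : X) : (N x : ℝ≥0∞) ^ q ≤
      (Function.support N).indicator (fun _ ↦ ENNReal.ofReal (Real.exp Λ) ^ q) x := by
    by_cases hx : N x = 0
    · simp [hx, hq]
    · rw [indicator_of_mem (Function.mem_support.2 hx)]
      gcongr
      rw [← ENNReal.ofReal_coe_nnreal]
      exact ENNReal.ofReal_le_ofReal ((Real.le_exp_log _).trans
        (Real.exp_le_exp.2 ((le_abs_self _).trans (hG.abs_log_norm_le x))))
  calc ∫⁻ x, (N x : ℝ≥0∞) ^ q ∂μ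
      ≤ ∫⁻ x, (Function.support N).indicator (fun _ ↦ ENNReal.ofReal (Real.exp Λ) ^ q) x ∂μ :=
        lintegral_mono hbound
    _ = ENNReal.ofReal (Real.exp Λ) ^ q * μ (Function.support N) :=
        lintegral_indicator_const (measurableSet_support hG.measurable_norm) _
    _ < ∞ := ENNReal.mul_lt_top (ENNReal.rpow_lt_top_of_nonneg hq.le ENNReal.ofReal_ne_top)
        hG.measure_support_lt_top

lemma integrable [SFinite μ] [IsFiniteMeasure ν] (hG : IsFiberNormed μ ν p Λ G N) :
    Integrable G (μ.prod ν) := by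
  have hint : Integrable ((Function.support N ×ˢ univ).indicator fun _ : X × τ ↦ Real.exp Λ)
      (μ.prod ν) := by
    refine (integrable_indicator_iff
      ((measurableSet_support hG.measurable_norm).prod .univ)).2 (integrableOn_const ?_)
    rw [Measure.prod_prod]
    exact ENNReal.mul_ne_top hG.measure_support_lt_top.ne (measure_ne_top ν _)
  refine hint.mono' hG.measurable.aestronglyMeasurable (.of_forall ?_)
  rintro ⟨x, t⟩
  by_cases hx : N x = 0
  · simp [hG.eq_zero x t hx, hx]
  · rw [indicator_of_mem (mk_mem_prod (Function.mem_support.2 hx) (mem_univ t))]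
    exact (Real.le_exp_log _).trans
      (Real.exp_le_exp.2 ((le_abs_self _).trans (hG.abs_log_le (x, t))))

lemma lintegral_prod_rpow_mul [SFinite ν] (hG : IsFiberNormed μ ν p Λ G N) (hp : 0 < p)
    (hq : 0 < q) :
    ∫⁻ ω : X × τ, ‖G ω‖ₑ ^ p * (N ω.1 : ℝ≥0∞) ^ (q - p) ∂μ.prod ν = ∫⁻ x, (N x : ℝ≥0∞) ^ q ∂μ := by
  have hGm := hG.measurable
  have hNm := hG.measurable_norm
  rw [lintegral_prod _ (by fun_prop)]
  refine lintegral_congr fun x ↦ ?_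
  dsimp only
  rw [lintegral_mul_const _ (by fun_prop), hG.lintegral_fiber]
  by_cases hx : N x = 0
  · simp [hx, hp, hq]
  · rw [← ENNReal.rpow_add _ _ (by simpa using hx) ENNReal.coe_ne_top, add_sub_cancel]

lemma lintegral_mul_fiber_le (hG : IsFiberNormed μ ν p Λ G N) {H : X × τ → ℝ≥0∞}
    (hH : Measurable H) {p₀ : ℝ} (hp₀ : 1 ≤ p₀) (x : X) :
    ∫⁻ t, H (x, t) * ‖G (x, t)‖ₑ ^ (p * (1 - 1 / p₀)) ∂ν ≤
      (∫⁻ t, H (x, t) ^ p₀ ∂ν) ^ (1 / p₀) * (N x : ℝ≥0∞) ^ (p * (1 - 1 / p₀)) := by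
  have hGm := hG.measurable
  have hp₀' : 0 < p₀ := one_pos.trans_le hp₀
  have hexp : 0 ≤ 1 - 1 / p₀ := sub_nonneg.2 ((div_le_one hp₀').2 hp₀)
  calc ∫⁻ t, H (x, t) * ‖G (x, t)‖ₑ ^ (p * (1 - 1 / p₀)) ∂ν
      = ∫⁻ t, (H (x, t) ^ p₀) ^ (1 / p₀) * (‖G (x, t)‖ₑ ^ p) ^ (1 - 1 / p₀) ∂ν := by
        simp only [← ENNReal.rpow_mul, mul_one_div_cancel hp₀'.ne', ENNReal.rpow_one]
    _ ≤ (∫⁻ t, H (x, t) ^ p₀ ∂ν) ^ (1 / p₀) * (∫⁻ t, ‖G (x, t)‖ₑ ^ p ∂ν) ^ (1 - 1 / p₀) :=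
        ENNReal.lintegral_mul_norm_pow_le (by fun_prop) (by fun_prop) (by positivity) hexp
          (by ring)
    _ = _ := by rw [hG.lintegral_fiber, ← ENNReal.rpow_mul]

lemma lintegral_mul_le [SFinite ν] (hG : IsFiberNormed μ ν p Λ G N) {H g : X × τ → ℝ≥0∞}
    (hH : Measurable H) (hg : Measurable g) {p₀ q₀ : ℝ} (hp₀ : 1 ≤ p₀) (hq₀ : 1 ≤ q₀)
    (hg_zero : ∀ x t, N x = 0 → g (x, t) = 0)
    (hg_le : ∀ x t, N x ≠ 0 → g (x, t) ≤ ‖G (x, t)‖ₑ ^ (p * (1 - 1 / p₀)) *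
      (N x : ℝ≥0∞) ^ (q * (1 - 1 / q₀) - p * (1 - 1 / p₀))) :
    ∫⁻ ω, H ω * g ω ∂μ.prod ν ≤
      (∫⁻ x, ((∫⁻ t, H (x, t) ^ p₀ ∂ν) ^ (1 / p₀)) ^ q₀ ∂μ) ^ (1 / q₀) *
        (∫⁻ x, (N x : ℝ≥0∞) ^ q ∂μ) ^ (1 - 1 / q₀) := by
  have hGm := hG.measurable
  have hNm := hG.measurable_norm
  have hq₀' : 0 < q₀ := one_pos.trans_le hq₀
  have hexp : 0 ≤ 1 - 1 / q₀ := sub_nonneg.2 ((div_le_one hq₀').2 hq₀)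
  have hfiber (x : X) : ∫⁻ t, H (x, t) * g (x, t) ∂ν ≤
      (((∫⁻ t, H (x, t) ^ p₀ ∂ν) ^ (1 / p₀)) ^ q₀) ^ (1 / q₀) *
        ((N x : ℝ≥0∞) ^ q) ^ (1 - 1 / q₀) := by
    by_cases hx : N x = 0
    · simp [hg_zero x _ hx]
    have hx' : (N x : ℝ≥0∞) ≠ 0 := by simpa using hx
    calc ∫⁻ t, H (x, t) * g (x, t) ∂ν
        ≤ ∫⁻ t, H (x, t) * ‖G (x, t)‖ₑ ^ (p * (1 - 1 / p₀)) *
            (N x : ℝ≥0∞) ^ (q * (1 - 1 / q₀) - p * (1 - 1 / p₀)) ∂ν := by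
          refine lintegral_mono fun t ↦ ?_
          simp only [mul_assoc]
          gcongr
          exact hg_le x t hx
      _ ≤ (∫⁻ t, H (x, t) ^ p₀ ∂ν) ^ (1 / p₀) * (N x : ℝ≥0∞) ^ (p * (1 - 1 / p₀)) *
            (N x : ℝ≥0∞) ^ (q * (1 - 1 / q₀) - p * (1 - 1 / p₀)) := by
          rw [lintegral_mul_const _ (by fun_prop)]
          gcongr
          exact hG.lintegral_mul_fiber_le hH hp₀ x
      _ = _ := by
          rw [mul_assoc, ← ENNReal.rpow_add _ _ hx' ENNReal.coe_ne_top, add_sub_cancel,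
            ENNReal.rpow_mul, ← ENNReal.rpow_mul _ q₀, mul_one_div_cancel hq₀'.ne',
            ENNReal.rpow_one]
  rw [lintegral_prod _ (by fun_prop)]
  exact (lintegral_mono hfiber).trans <| ENNReal.lintegral_mul_norm_pow_le
    (by fun_prop) (by fun_prop) (by positivity) hexp (by ring)

lemma lintegral_mul_rpow_le_of_kernel_bounds {Y : Type*} [MeasurableSpace Y] {η : Measure Y}
    [SFinite μ] [SFinite ν] [SFinite η] (hG : IsFiberNormed μ ν p Λ G N) (hp : 0 < p)
    (hq : 0 < q) {u : ℝ} (hu : u ∈ Icc (0 : ℝ) 1) {k : (X × τ) × Y → ℝ≥0∞} (hk : Measurable k)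
    {M : ℝ≥0∞} (hM_fiber : ∀ x y, ∫⁻ t, k ((x, t), y) ∂ν ≤ M)
    (hM : ∀ ω, ∫⁻ y, k (ω, y) ∂η ≤ M) {f : Y → ℝ≥0∞} (hf : Measurable f)
    (hf_le : ∫⁻ y, f y ^ p ∂η ≤ 1) {V : (X × τ) × Y → ℝ≥0∞}
    (hV_zero : ∀ x t y, N x = 0 → V ((x, t), y) = 0)
    (hV_le : ∀ x t y, N x ≠ 0 → V ((x, t), y) ≤ k ((x, t), y) * (f y ^ (p * u) *
      (‖G (x, t)‖ₑ ^ (p * (1 - u)) * (N x : ℝ≥0∞) ^ (q - p * (1 - u))))) :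
    ∫⁻ ω, V ω ∂(μ.prod ν).prod η ≤ M * ∫⁻ x, (N x : ℝ≥0∞) ^ q ∂μ := by
  have hGm := hG.measurable
  have hNm := hG.measurable_norm
  have hu' : 0 ≤ 1 - u := sub_nonneg.2 hu.2
  let a : (X × τ) × Y → ℝ≥0∞ := fun ω ↦ k ω * (f ω.2 ^ p * (N ω.1.1 : ℝ≥0∞) ^ q)
  let b : (X × τ) × Y → ℝ≥0∞ :=
    fun ω ↦ k ω * (‖G ω.1‖ₑ ^ p * (N ω.1.1 : ℝ≥0∞) ^ (q - p))
  have hVab : ∀ ω, V ω ≤ a ω ^ u * b ω ^ (1 - u) := by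
    rintro ⟨⟨x, t⟩, y⟩
    by_cases hx : N x = 0
    · simp [hV_zero x t y hx]
    · exact (hV_le x t y hx).trans_eq
        (mul_rpow_interp _ _ _ (by simpa using hx) ENNReal.coe_ne_top hu)
  have ha : ∫⁻ ω, a ω ∂(μ.prod ν).prod η ≤ M * ∫⁻ x, (N x : ℝ≥0∞) ^ q ∂μ :=
    (lintegral_kernel_mul_mul_le hk hM_fiber (hf.pow_const p)
      (hNm.coe_nnreal_ennreal.pow_const q)).trans
        (mul_le_mul_right (mul_le_of_le_one_left' hf_le) M)
  have hb : ∫⁻ ω, b ω ∂(μ.prod ν).prod η ≤ M * ∫⁻ x, (N x : ℝ≥0∞) ^ q ∂μ := by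
    rw [← hG.lintegral_prod_rpow_mul hp hq]
    exact lintegral_kernel_mul_le hk hM (by fun_prop)
  calc ∫⁻ ω, V ω ∂(μ.prod ν).prod η
      ≤ ∫⁻ ω, a ω ^ u * b ω ^ (1 - u) ∂(μ.prod ν).prod η := lintegral_mono hVab
    _ ≤ (M * ∫⁻ x, (N x : ℝ≥0∞) ^ q ∂μ) ^ u * (M * ∫⁻ x, (N x : ℝ≥0∞) ^ q ∂μ) ^ (1 - u) :=
        (ENNReal.lintegral_mul_norm_pow_le (by fun_prop) (by fun_prop) hu.1 hu' (by ring)).trans <|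
          mul_le_mul' (ENNReal.rpow_le_rpow ha hu.1) (ENNReal.rpow_le_rpow hb hu')
    _ = M * ∫⁻ x, (N x : ℝ≥0∞) ^ q ∂μ := by
        rw [← ENNReal.rpow_add_of_nonneg _ _ hu.1 hu', add_sub_cancel, ENNReal.rpow_one]

end IsFiberNormed

end DualFamily

section KernelOperators

variable {X τ Y : Type*} [MeasurableSpace X] [MeasurableSpace τ] [MeasurableSpace Y]

/-- The integral operator with kernel `k`, acting on functions on `Y`. -/
def kernelOp {Ω : Type*} (η : Measure Y) (k : Ω × Y → ℂ) (f : Y → ℂ) (ω : Ω) : ℂ :=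
  ∫ y, k (ω, y) * f y ∂η

/-- The norm of `F` in `L^q(X; L^s(τ))`: inner exponent `s`, outer exponent `q`. -/
def eLpMixedNorm (q s : ℝ≥0∞) (μ : Measure X) (ν : Measure τ) (F : X × τ → ℂ) : ℝ≥0∞ :=
  eLpNorm (fun x ↦ eLpNorm (fun t ↦ F (x, t)) s ν) q μ

/-- The integral operator with kernel `k` is bounded from `L^p(Y)` to `L^q(X; L^s(τ))` with norm
at most `M`. It is tested on integrable functions only, so that bounded kernels raise no
question of convergence. -/
def HasMixedBound (μ : Measure X) (ν : Measure τ) (η : Measure Y) (k : (X × τ) × Y → ℂ)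
    (p q s M : ℝ≥0∞) : Prop :=
  ∀ f : Y → ℂ, Measurable f → Integrable f η → MemLp f p η →
    eLpMixedNorm q s μ ν (kernelOp η k f) ≤ M * eLpNorm f p η

lemma measurable_kernelOp {Ω : Type*} [MeasurableSpace Ω] {η : Measure Y} [SFinite η]
    {k : Ω × Y → ℂ} (hk : Measurable k) {f : Y → ℂ} (hf : Measurable f) :
    Measurable (kernelOp η k f) :=
  (StronglyMeasurable.integral_prod_right' (f := fun z : Ω × Y ↦ k z * f z.2)
    (by fun_prop)).measurable

lemma eLpMixedNorm_nnreal_eq_lintegral {μ : Measure X} {ν : Measure τ} {F : X × τ → ℂ} {q s : ℝ≥0}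
    (hq : q ≠ 0) (hs : s ≠ 0) :
    eLpMixedNorm q s μ ν F =
      (∫⁻ x, ((∫⁻ t, ‖F (x, t)‖ₑ ^ (s : ℝ) ∂ν) ^ (1 / (s : ℝ))) ^ (q : ℝ) ∂μ) ^ (1 / (q : ℝ)) := by
  simp only [eLpMixedNorm, eLpNorm_nnreal_eq_lintegral hq, eLpNorm_nnreal_eq_lintegral hs,
    enorm_eq_self]

lemma eLpNorm_le_one_iff {f : Y → ℂ} {η : Measure Y} {p : ℝ≥0} (hp : p ≠ 0) :
    eLpNorm f p η ≤ 1 ↔ ∫⁻ y, ‖f y‖ₑ ^ (p : ℝ) ∂η ≤ 1 := by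
  have hp' : (0 : ℝ) < p := by positivity
  rw [eLpNorm_nnreal_eq_lintegral hp, one_div, ENNReal.rpow_inv_le_iff hp', ENNReal.one_rpow]

end KernelOperators

section Twist

lemma enorm_cexp_mul_log {x : ℝ≥0} (hx : x ≠ 0) (c : ℂ) :
    ‖Complex.exp (c * Real.log x)‖ₑ = (x : ℝ≥0∞) ^ c.re := by
  have hx' : (0 : ℝ) < x := by positivity
  rw [← ENNReal.coe_rpow_of_ne_zero hx, enorm_eq_nnnorm, ENNReal.coe_inj, ← NNReal.coe_inj,
    coe_nnnorm, Complex.norm_exp, NNReal.coe_rpow, Real.rpow_def_of_pos hx', Complex.re_mul_ofReal,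
    mul_comm]

/-- The complex power `w |w|^c`, entire in `c`; at `w = 0` it is `0` since `Real.log 0 = 0`. -/
def twist (c w : ℂ) : ℂ := w * Complex.exp (c * Real.log ‖w‖)

lemma measurable_twist (c : ℂ) : Measurable (twist c) := by
  unfold twist
  fun_prop

lemma twist_zero_left (w : ℂ) : twist 0 w = w := by simp [twist]

lemma mul_twist_conj {p : ℝ} (hp : 0 < p) (w : ℂ) :
    w * twist (p - 2 : ℝ) ((starRingEnd ℂ) w) = (‖w‖ ^ p : ℝ) := by
  rcases eq_or_ne w 0 with rfl | hw
  · simp [hp.ne']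
  have hw' : 0 < ‖w‖ := norm_pos_iff.2 hw
  rw [twist, RCLike.norm_conj, ← mul_assoc, Complex.mul_conj, Complex.normSq_eq_norm_sq,
    ← add_sub_cancel 2 p, Real.rpow_add hw', Real.rpow_two, Real.rpow_def_of_pos hw']
  push_cast
  ring_nf

lemma enorm_twist_le (c w : ℂ) : ‖twist c w‖ₑ ≤ ‖w‖ₑ ^ (1 + c.re) := by
  rcases eq_or_ne w 0 with rfl | hw
  · simp [twist]
  · have hw' : ‖w‖₊ ≠ 0 := nnnorm_ne_zero_iff.2 hw
    rw [twist, enorm_mul, ← coe_nnnorm, enorm_cexp_mul_log hw',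
      ENNReal.rpow_add _ _ (enorm_ne_zero.2 hw) enorm_ne_top, ENNReal.rpow_one]
    rfl

lemma eLpNorm_twist_le_one {Y : Type*} [MeasurableSpace Y] {η : Measure Y} {f : Y → ℂ} {p : ℝ}
    {p₀ : ℝ≥0} (hp₀ : p₀ ≠ 0) (hf_le : ∫⁻ y, ‖f y‖ₑ ^ p ∂η ≤ 1) {a : ℂ}
    (ha : a.re = p / p₀ - 1) : eLpNorm (fun y ↦ twist a (f y)) p₀ η ≤ 1 := by
  rw [eLpNorm_le_one_iff hp₀]
  refine (lintegral_mono fun y ↦ ?_).trans hf_le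
  calc ‖twist a (f y)‖ₑ ^ (p₀ : ℝ) ≤ (‖f y‖ₑ ^ (1 + a.re)) ^ (p₀ : ℝ) := by
        gcongr
        exact enorm_twist_le a (f y)
    _ = ‖f y‖ₑ ^ p := by
        rw [← ENNReal.rpow_mul, ha]
        congr 1
        field_simp
        ring

/-- The function `conj G |G|^b N^c`, against which the values of the operator are paired. -/
def dualTwist {X τ : Type*} (G : X × τ → ℂ) (N : X → ℝ≥0) (b c : ℂ) (ω : X × τ) : ℂ :=
  twist b ((starRingEnd ℂ) (G ω)) * Complex.exp (c * Real.log (N ω.1))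

lemma enorm_dualTwist_le {X τ : Type*} {G : X × τ → ℂ} {N : X → ℝ≥0} (b c : ℂ)
    {x : X} (hx : N x ≠ 0) (t : τ) :
    ‖dualTwist G N b c (x, t)‖ₑ ≤ ‖G (x, t)‖ₑ ^ (1 + b.re) * (N x : ℝ≥0∞) ^ c.re := by
  rw [dualTwist, enorm_mul, enorm_cexp_mul_log hx]
  gcongr
  exact (enorm_twist_le _ _).trans_eq (by rw [RCLike.enorm_conj])

lemma dualTwist_mul_twist {X τ : Type*} (G : X × τ → ℂ) (N : X → ℝ≥0) (a b c : ℂ) (ω : X × τ)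
    (w : ℂ) :
    dualTwist G N b c ω * twist a w = dualTwist G N 0 0 ω * twist 0 w *
      Complex.exp (a * Real.log ‖w‖ + b * Real.log ‖G ω‖ + c * Real.log (N ω.1)) := by
  simp only [dualTwist, twist, zero_mul, Complex.exp_zero, mul_one, RCLike.norm_conj,
    Complex.exp_add]
  ring

end Twist

section TwistedPairing

variable {X τ Y : Type*} [MeasurableSpace X] [MeasurableSpace τ] [MeasurableSpace Y]
  {μ : Measure X} {ν : Measure τ} {η : Measure Y} {k : (X × τ) × Y → ℂ} {f : Y → ℂ}
  {G : X × τ → ℂ} {N : X → ℝ≥0} {Λ : ℝ}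

/-- The pairing `⟨T (f |f|^a), G |G|^b N^c⟩` of the operator `T` with kernel `k`, as an integral
over the product space; it is entire in the exponents. -/
def twistedPairing (μ : Measure X) (ν : Measure τ) (η : Measure Y) (k : (X × τ) × Y → ℂ)
    (f : Y → ℂ) (G : X × τ → ℂ) (N : X → ℝ≥0) (a b c : ℂ) : ℂ :=
  ∫ z, k z * (dualTwist G N b c z.1 * twist a (f z.2)) ∂(μ.prod ν).prod η

lemma integrable_twist (hf : Integrable f η) (hf_log : ∀ y, |Real.log ‖f y‖| ≤ Λ) (c : ℂ) :
    Integrable (fun y ↦ twist c (f y)) η :=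
  hf.mul_bdd (c := Real.exp (|c.re| * Λ))
    (by have := hf.1.norm.aemeasurable; exact AEMeasurable.aestronglyMeasurable (by fun_prop))
    (.of_forall fun y ↦ norm_cexp_mul_ofReal_le le_rfl (hf_log y))

namespace IsFiberNormed

variable {p : ℝ}

lemma measurable_dualTwist (hG : IsFiberNormed μ ν p Λ G N) (b c : ℂ) :
    Measurable (dualTwist G N b c) := by
  have hGm := hG.measurable
  have hNm := hG.measurable_norm
  unfold dualTwist twist
  fun_prop

lemma integrable_dualTwist [SFinite μ] [IsFiniteMeasure ν] (hG : IsFiberNormed μ ν p Λ G N)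
    (b c : ℂ) : Integrable (dualTwist G N b c) (μ.prod ν) := by
  have hNm := hG.measurable_norm
  have hconj : Integrable (fun ω ↦ (starRingEnd ℂ) (G ω)) (μ.prod ν) :=
    hG.integrable.congr' (by have := hG.measurable; fun_prop) (.of_forall fun ω ↦ by simp)
  exact (integrable_twist (Λ := Λ) hconj (fun ω ↦ by simpa using hG.abs_log_le ω) b).mul_bdd
    (c := Real.exp (|c.re| * Λ)) (Measurable.aestronglyMeasurable (by fun_prop))
    (.of_forall fun ω ↦ norm_cexp_mul_ofReal_le le_rfl (hG.abs_log_norm_le ω.1))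

lemma dualTwist_eq_zero (hG : IsFiberNormed μ ν p Λ G N) (b c : ℂ) {x : X} (hx : N x = 0) (t : τ) :
    dualTwist G N b c (x, t) = 0 := by
  simp [dualTwist, twist, hG.eq_zero x t hx]

lemma integrable_pairing [SFinite μ] [IsFiniteMeasure ν] [SFinite η]
    (hG : IsFiberNormed μ ν p Λ G N) (hk : Measurable k) {B : ℝ} (hB : ∀ z, ‖k z‖ ≤ B)
    (hf : Integrable f η) (hf_log : ∀ y, |Real.log ‖f y‖| ≤ Λ) (a b c : ℂ) :
    Integrable (fun z : (X × τ) × Y ↦ k z * (dualTwist G N b c z.1 * twist a (f z.2)))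
      ((μ.prod ν).prod η) :=
  ((hG.integrable_dualTwist b c).mul_prod (integrable_twist hf hf_log a)).bdd_mul
    hk.aestronglyMeasurable (.of_forall hB)

end IsFiberNormed

lemma abs_log_combination_le {a b c x y z : ℝ} (hx : |x| ≤ Λ) (hy : |y| ≤ Λ) (hz : |z| ≤ Λ) :
    |a * x + b * y + c * z| ≤ (|a| + |b| + |c|) * Λ := by
  calc |a * x + b * y + c * z| ≤ |a| * |x| + |b| * |y| + |c| * |z| := by
        simpa only [abs_mul] using abs_add_three (a * x) (b * y) (c * z)
    _ ≤ |a| * Λ + |b| * Λ + |c| * Λ := by gcongr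
    _ = (|a| + |b| + |c|) * Λ := by ring

end TwistedPairing

lemma rpow_le_of_le_mul_rpow_one_sub {I M : ℝ≥0∞} (hI : I ≠ ∞) {s : ℝ} (hs : 0 < s)
    (h : I ≤ M * I ^ (1 - s)) : I ^ s ≤ M := by
  rcases eq_or_ne I 0 with rfl | hI0
  · simp [hs]
  calc I ^ s = I * I ^ (s - 1) := by
        nth_rw 2 [← ENNReal.rpow_one I]
        rw [← ENNReal.rpow_add _ _ hI0 hI, add_sub_cancel]
    _ ≤ M * I ^ (1 - s) * I ^ (s - 1) := by gcongr
    _ = M := by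
        rw [mul_assoc, ← ENNReal.rpow_add _ _ hI0 hI, sub_add_sub_cancel, sub_self,
          ENNReal.rpow_zero, mul_one]

section Interpolation

variable {X τ Y : Type*} [MeasurableSpace X] [MeasurableSpace τ] [MeasurableSpace Y]
  {μ : Measure X} {ν : Measure τ} {η : Measure Y} [SFinite μ] [IsFiniteMeasure ν] [SFinite η]
  {k : (X × τ) × Y → ℂ} {f : Y → ℂ} {G : X × τ → ℂ} {N : X → ℝ≥0} {B Λ : ℝ} {M₀ M₁ : ℝ≥0}

namespace IsFiberNormed

lemma enorm_twistedPairing_interp_le {p : ℝ} (hG : IsFiberNormed μ ν p Λ G N) (hk : Measurable k)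
    (hB : ∀ z, ‖k z‖ ≤ B) (hf : Measurable f) (hfi : Integrable f η)
    (hf_log : ∀ y, |Real.log ‖f y‖| ≤ Λ) {a₀ a₁ b₀ b₁ c₀ c₁ : ℝ} {A₀ A₁ : ℝ≥0}
    (h₀ : ∀ a b c : ℂ, a.re = a₀ → b.re = b₀ → c.re = c₀ →
      ‖twistedPairing μ ν η k f G N a b c‖ₑ ≤ A₀)
    (h₁ : ∀ a b c : ℂ, a.re = a₁ → b.re = b₁ → c.re = c₁ →
      ‖twistedPairing μ ν η k f G N a b c‖ₑ ≤ A₁) {θ : ℝ} (hθ : θ ∈ Icc (0 : ℝ) 1) :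
    ‖twistedPairing μ ν η k f G N ((1 - θ) * a₀ + θ * a₁ : ℝ) ((1 - θ) * b₀ + θ * b₁ : ℝ)
      ((1 - θ) * c₀ + θ * c₁ : ℝ)‖ₑ ≤ (A₀ : ℝ≥0∞) ^ (1 - θ) * (A₁ : ℝ≥0∞) ^ θ := by
  have hGm := hG.measurable
  have hNm := hG.measurable_norm
  let L (a b c : ℝ) (z : (X × τ) × Y) : ℝ :=
    a * Real.log ‖f z.2‖ + b * Real.log ‖G z.1‖ + c * Real.log (N z.1.1)
  have hL_meas (a b c : ℝ) : Measurable (L a b c) := by fun_prop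
  have hL_le (a b c : ℝ) (z : (X × τ) × Y) : |L a b c z| ≤ (|a| + |b| + |c|) * Λ :=
    abs_log_combination_le (hf_log z.2) (hG.abs_log_le z.1) (hG.abs_log_norm_le z.1.1)
  have hpairing (ζ : ℂ) : twistedPairing μ ν η k f G N ((1 - ζ) * a₀ + ζ * a₁)
      ((1 - ζ) * b₀ + ζ * b₁) ((1 - ζ) * c₀ + ζ * c₁) =
        ∫ z, k z * (dualTwist G N 0 0 z.1 * twist 0 (f z.2)) *
          Complex.exp ((1 - ζ) * L a₀ b₀ c₀ z + ζ * L a₁ b₁ c₁ z) ∂(μ.prod ν).prod η := by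
    refine integral_congr_ae (.of_forall fun z ↦ ?_)
    dsimp only
    rw [dualTwist_mul_twist, ← mul_assoc]
    congr 2
    simp only [L]
    push_cast
    ring
  have hre₀ (ζ : ℂ) (hζ : ζ.re = 0) (r s : ℝ) : ((1 - ζ) * r + ζ * s).re = r := by simp [hζ]
  have hre₁ (ζ : ℂ) (hζ : ζ.re = 1) (r s : ℝ) : ((1 - ζ) * r + ζ * s).re = s := by simp [hζ]
  have hinterp := enorm_integral_mul_cexp_interp_le (hG.integrable_pairing hk hB hfi hf_log 0 0 0)
    (hL_meas a₀ b₀ c₀) (hL_meas a₁ b₁ c₁)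
    (fun z ↦ (hL_le a₀ b₀ c₀ z).trans (le_max_left _ ((|a₁| + |b₁| + |c₁|) * Λ)))
    (fun z ↦ (hL_le a₁ b₁ c₁ z).trans (le_max_right _ _))
    (fun ζ hζ ↦ by
      rw [← hpairing]
      exact h₀ _ _ _ (hre₀ ζ hζ _ _) (hre₀ ζ hζ _ _) (hre₀ ζ hζ _ _))
    (fun ζ hζ ↦ by
      rw [← hpairing]
      exact h₁ _ _ _ (hre₁ ζ hζ _ _) (hre₁ ζ hζ _ _) (hre₁ ζ hζ _ _)) hθ
  rw [← hpairing] at hinterp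
  exact_mod_cast hinterp

lemma enorm_twistedPairing_le_of_hasMixedBound {p : ℝ} (hG : IsFiberNormed μ ν p Λ G N)
    (hk : Measurable k) (hB : ∀ z, ‖k z‖ ≤ B) (hf : Measurable f) (hfi : Integrable f η)
    (hf_log : ∀ y, |Real.log ‖f y‖| ≤ Λ) (hf_le : ∫⁻ y, ‖f y‖ₑ ^ p ∂η ≤ 1) {p₀ q₀ : ℝ≥0}
    (hp₀ : 1 ≤ p₀) (hq₀ : 1 ≤ q₀) (h₀ : HasMixedBound μ ν η k p₀ q₀ p₀ M₀) {q : ℝ} {a b c : ℂ}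
    (ha : a.re = p / p₀ - 1) (hb : b.re = p * (1 - 1 / p₀) - 1)
    (hc : c.re = q * (1 - 1 / q₀) - p * (1 - 1 / p₀)) :
    ‖twistedPairing μ ν η k f G N a b c‖ₑ ≤
      M₀ * (∫⁻ x, (N x : ℝ≥0∞) ^ q ∂μ) ^ (1 - 1 / (q₀ : ℝ)) := by
  have hp₀' : p₀ ≠ 0 := (one_pos.trans_le hp₀).ne'
  have hq₀' : q₀ ≠ 0 := (one_pos.trans_le hq₀).ne'
  have htwist_meas : Measurable fun y ↦ twist a (f y) := (measurable_twist a).comp hf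
  have htwist_le : eLpNorm (fun y ↦ twist a (f y)) p₀ η ≤ 1 := eLpNorm_twist_le_one hp₀' hf_le ha
  have hdual (x : X) (t : τ) (hx : N x ≠ 0) := enorm_dualTwist_le (G := G) b c hx t
  simp only [hb, hc, add_sub_cancel] at hdual
  have hop := h₀ _ htwist_meas (integrable_twist hfi hf_log a)
    ⟨htwist_meas.aestronglyMeasurable, htwist_le.trans_lt ENNReal.one_lt_top⟩
  rw [eLpMixedNorm_nnreal_eq_lintegral hq₀' hp₀'] at hop
  calc ‖twistedPairing μ ν η k f G N a b c‖ₑ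
      = ‖∫ ω, kernelOp η k (fun y ↦ twist a (f y)) ω * dualTwist G N b c ω ∂μ.prod ν‖ₑ := by
        rw [twistedPairing, integral_prod _ (hG.integrable_pairing hk hB hfi hf_log a b c)]
        simp only [kernelOp, ← integral_mul_const, mul_assoc, mul_comm (dualTwist _ _ _ _ _)]
    _ ≤ ∫⁻ ω, ‖kernelOp η k (fun y ↦ twist a (f y)) ω‖ₑ * ‖dualTwist G N b c ω‖ₑ ∂μ.prod ν := by
        simp only [← enorm_mul]
        exact enorm_integral_le_lintegral_enorm _
    _ ≤ _ := hG.lintegral_mul_le (measurable_kernelOp hk htwist_meas).enorm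
        (hG.measurable_dualTwist b c).enorm (by exact_mod_cast hp₀) (by exact_mod_cast hq₀)
        (fun x t hx ↦ by simp [hG.dualTwist_eq_zero b c hx t])
        hdual
    _ ≤ M₀ * (∫⁻ x, (N x : ℝ≥0∞) ^ q ∂μ) ^ (1 - 1 / (q₀ : ℝ)) := by
        exact mul_le_mul_left (hop.trans (mul_le_of_le_one_right' htwist_le)) _

lemma enorm_twistedPairing_le_of_kernel_bounds {p q : ℝ} (hG : IsFiberNormed μ ν p Λ G N)
    (hp : 0 < p) (hq : 0 < q) (hk : Measurable k) (hM_fiber : ∀ x y, ∫⁻ t, ‖k ((x, t), y)‖ₑ ∂ν ≤ M₁)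
    (hM : ∀ ω, ∫⁻ y, ‖k (ω, y)‖ₑ ∂η ≤ M₁) (hf : Measurable f)
    (hf_le : ∫⁻ y, ‖f y‖ₑ ^ p ∂η ≤ 1) {u : ℝ} (hu : u ∈ Icc (0 : ℝ) 1) {a b c : ℂ}
    (ha : a.re = p * u - 1) (hb : b.re = p * (1 - u) - 1) (hc : c.re = q - p * (1 - u)) :
    ‖twistedPairing μ ν η k f G N a b c‖ₑ ≤ M₁ * ∫⁻ x, (N x : ℝ≥0∞) ^ q ∂μ := by
  refine (enorm_integral_le_lintegral_enorm _).trans <|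
    hG.lintegral_mul_rpow_le_of_kernel_bounds hp hq hu hk.enorm hM_fiber hM hf.enorm hf_le
      (fun x t y hx ↦ by simp [hG.dualTwist_eq_zero b c hx t]) fun x t y hx ↦ ?_
  rw [enorm_mul, enorm_mul, mul_comm ‖dualTwist _ _ _ _ _‖ₑ]
  have hdual := enorm_dualTwist_le (G := G) b c hx t
  have htwist := enorm_twist_le a (f y)
  rw [ha, add_sub_cancel] at htwist
  rw [hb, hc, add_sub_cancel] at hdual
  gcongr

lemma enorm_twistedPairing_self {p q : ℝ} (hG : IsFiberNormed μ ν p Λ G N) (hp : 0 < p)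
    (hq : 0 < q) (hk : Measurable k) (hB : ∀ z, ‖k z‖ ≤ B) (hfi : Integrable f η)
    (hf_log : ∀ y, |Real.log ‖f y‖| ≤ Λ) (hGf : ∀ ω, G ω ≠ 0 → G ω = kernelOp η k f ω) :
    ‖twistedPairing μ ν η k f G N (0 : ℝ) (p - 2 : ℝ) (q - p : ℝ)‖ₑ =
      ∫⁻ x, (N x : ℝ≥0∞) ^ q ∂μ := by
  have hint := hG.integrable_pairing hk hB hfi hf_log (0 : ℝ) (p - 2 : ℝ) (q - p : ℝ)
  let h (ω : X × τ) : ℝ := ‖G ω‖ ^ p * Real.exp ((q - p) * Real.log (N ω.1))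
  have hh (ω : X × τ) : 0 ≤ h ω := by positivity
  have hpair (ω : X × τ) : ∫ y, k (ω, y) * (dualTwist G N (p - 2 : ℝ) (q - p : ℝ) ω *
      twist (0 : ℝ) (f y)) ∂η = h ω := by
    simp only [mul_left_comm (k _), integral_const_mul, Complex.ofReal_zero, twist_zero_left]
    change dualTwist _ _ _ _ _ * kernelOp η k f ω = _
    rw [dualTwist, mul_comm, ← mul_assoc]
    rcases eq_or_ne (G ω) 0 with hω | hω
    · simp [h, hω, twist, hp.ne']
    · rw [← hGf ω hω, mul_twist_conj hp]
      simp only [h]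
      push_cast
      rfl
  have henorm (ω : X × τ) : ENNReal.ofReal (h ω) = ‖G ω‖ₑ ^ p * (N ω.1 : ℝ≥0∞) ^ (q - p) := by
    rcases eq_or_ne (N ω.1) 0 with hN | hN
    · simp [h, hG.eq_zero ω.1 ω.2 hN, hp, hp.ne']
    · have hN' : (0 : ℝ) < N ω.1 := by positivity
      rw [ENNReal.ofReal_mul (by positivity), mul_comm (q - p), ← Real.rpow_def_of_pos hN',
        ← ENNReal.ofReal_rpow_of_nonneg (norm_nonneg _) hp.le, ofReal_norm,
        ← ENNReal.ofReal_rpow_of_pos hN', ENNReal.ofReal_coe_nnreal]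
  have hint_h : Integrable h (μ.prod ν) := by
    simpa only [hpair, RCLike.re_to_complex, Complex.ofReal_re] using hint.integral_prod_left.re
  calc ‖twistedPairing μ ν η k f G N (0 : ℝ) (p - 2 : ℝ) (q - p : ℝ)‖ₑ
      = ‖∫ ω, h ω ∂μ.prod ν‖ₑ := by
        rw [twistedPairing, integral_prod _ hint]
        simp only [hpair]
        rw [integral_complex_ofReal, ← ofReal_norm, Complex.norm_real, ofReal_norm]
    _ = ∫⁻ ω, ENNReal.ofReal (h ω) ∂μ.prod ν := by
        rw [Real.enorm_of_nonneg (integral_nonneg hh),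
          ofReal_integral_eq_lintegral_ofReal hint_h (.of_forall hh)]
    _ = ∫⁻ x, (N x : ℝ≥0∞) ^ q ∂μ := by
        simp only [henorm]
        exact hG.lintegral_prod_rpow_mul hp hq

/-- At `θ = 1 - lam` the affine exponents of the two endpoint estimates become `0`, `p - 2` and
`q - p`, for which the pairing is `∫ N ^ q`. -/
lemma lintegral_rpow_le {p q lam u : ℝ} (hG : IsFiberNormed μ ν p Λ G N) (hp : 0 < p) (hq : 0 < q)
    (hk : Measurable k) (hB : ∀ z, ‖k z‖ ≤ B)
    (hM_fiber : ∀ x y, ∫⁻ t, ‖k ((x, t), y)‖ₑ ∂ν ≤ M₁) (hM : ∀ ω, ∫⁻ y, ‖k (ω, y)‖ₑ ∂η ≤ M₁)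
    {p₀ q₀ : ℝ≥0} (hp₀ : 1 ≤ p₀) (hq₀ : 1 ≤ q₀) (h₀ : HasMixedBound μ ν η k p₀ q₀ p₀ M₀)
    (hlam : lam ∈ Icc (0 : ℝ) 1) (hu : u ∈ Icc (0 : ℝ) 1)
    (hp_eq : 1 / p = lam / p₀ + (1 - lam) * u) (hq_eq : 1 / q = lam / q₀)
    (hf : Measurable f) (hfi : Integrable f η) (hf_log : ∀ y, |Real.log ‖f y‖| ≤ Λ)
    (hf_le : ∫⁻ y, ‖f y‖ₑ ^ p ∂η ≤ 1) (hGf : ∀ ω, G ω ≠ 0 → G ω = kernelOp η k f ω) :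
    (∫⁻ x, (N x : ℝ≥0∞) ^ q ∂μ) ^ (1 / q) ≤ M₀ ^ lam * M₁ ^ (1 - lam) := by
  obtain ⟨I, hI : (I : ℝ≥0∞) = _⟩ := WithTop.ne_top_iff_exists.1 (hG.lintegral_rpow_lt_top hq).ne
  rw [← hI]
  have hq₀' : 1 / (q₀ : ℝ) ≤ 1 := (div_le_one (by positivity)).2 (by exact_mod_cast hq₀)
  have hinterp := hG.enorm_twistedPairing_interp_le hk hB hf hfi hf_log
    (A₀ := M₀ * I ^ (1 - 1 / (q₀ : ℝ))) (A₁ := M₁ * I)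
    (a₀ := p / p₀ - 1) (b₀ := p * (1 - 1 / p₀) - 1) (c₀ := q * (1 - 1 / q₀) - p * (1 - 1 / p₀))
    (a₁ := p * u - 1) (b₁ := p * (1 - u) - 1) (c₁ := q - p * (1 - u))
    (fun a b c ha hb hc ↦ by
      rw [ENNReal.coe_mul, ENNReal.coe_rpow_of_nonneg _ (sub_nonneg.2 hq₀'), hI]
      exact hG.enorm_twistedPairing_le_of_hasMixedBound hk hB hf hfi hf_log hf_le hp₀ hq₀ h₀
        ha hb hc)
    (fun a b c ha hb hc ↦ by
      rw [ENNReal.coe_mul, hI]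
      exact hG.enorm_twistedPairing_le_of_kernel_bounds hp hq hk hM_fiber hM hf hf_le hu ha hb hc)
    (θ := 1 - lam) ⟨sub_nonneg.2 hlam.2, sub_le_self _ hlam.1⟩
  have hp1 : p * (lam / p₀ + (1 - lam) * u) = 1 := by rw [← hp_eq, mul_one_div_cancel hp.ne']
  have hq1 : q * (lam / q₀) = 1 := by rw [← hq_eq, mul_one_div_cancel hq.ne']
  rw [sub_sub_cancel,
    show lam * (p / p₀ - 1) + (1 - lam) * (p * u - 1) = 0 by linear_combination hp1,
    show lam * (p * (1 - 1 / p₀) - 1) + (1 - lam) * (p * (1 - u) - 1) = p - 2 by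
      linear_combination -hp1,
    show lam * (q * (1 - 1 / q₀) - p * (1 - 1 / p₀)) + (1 - lam) * (q - p * (1 - u)) = q - p by
      linear_combination hp1 - hq1,
    hG.enorm_twistedPairing_self hp hq hk hB hfi hf_log hGf, ← hI] at hinterp
  refine rpow_le_of_le_mul_rpow_one_sub ENNReal.coe_ne_top (by positivity) (hinterp.trans_eq ?_)
  rw [ENNReal.coe_mul, ENNReal.coe_mul, ENNReal.coe_rpow_of_nonneg _ (sub_nonneg.2 hq₀'),
    ENNReal.mul_rpow_of_nonneg _ _ hlam.1, ENNReal.mul_rpow_of_nonneg _ _ (sub_nonneg.2 hlam.2),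
    ← ENNReal.rpow_mul, mul_mul_mul_comm, ← ENNReal.rpow_add_of_nonneg _ _
      (mul_nonneg (sub_nonneg.2 hq₀') hlam.1) (sub_nonneg.2 hlam.2)]
  congr 2
  rw [hq_eq]
  ring

end IsFiberNormed

end Interpolation

section Fatou

variable {X τ : Type*} [MeasurableSpace X] [MeasurableSpace τ] {μ : Measure X} {ν : Measure τ}

lemma rpow_liminf {u : ℕ → ℝ≥0∞} {r : ℝ} (hr : 0 < r) :
    (Filter.liminf u Filter.atTop) ^ r = Filter.liminf (fun n ↦ u n ^ r) Filter.atTop :=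
  (ENNReal.orderIsoRpow r hr).liminf_apply

lemma eLpMixedNorm_le_of_tendsto [SFinite ν] {F : ℕ → X × τ → ℂ} {G : X × τ → ℂ}
    (hF : ∀ n, Measurable (F n))
    (hFG : ∀ x, ∀ᵐ t ∂ν, Filter.Tendsto (fun n ↦ F n (x, t)) Filter.atTop (nhds (G (x, t))))
    {q s : ℝ≥0} (hq : q ≠ 0) (hs : s ≠ 0) {C : ℝ≥0∞} (hC : ∀ n, eLpMixedNorm q s μ ν (F n) ≤ C) :
    eLpMixedNorm q s μ ν G ≤ C := by
  have hinner (x : X) : eLpNorm (fun t ↦ G (x, t)) s ν ≤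
      Filter.liminf (fun n ↦ eLpNorm (fun t ↦ F n (x, t)) s ν) Filter.atTop :=
    Lp.eLpNorm_lim_le_liminf_eLpNorm
      (fun n ↦ ((hF n).comp measurable_prodMk_left).aestronglyMeasurable) _ (hFG x)
  have hmeas (n : ℕ) : Measurable fun x ↦ eLpNorm (fun t ↦ F n (x, t)) s ν := by
    simp only [eLpNorm_nnreal_eq_lintegral hs]
    have := hF n
    fun_prop
  have hq' : (0 : ℝ) < q := by positivity
  simp only [eLpMixedNorm, eLpNorm_nnreal_eq_lintegral hq, enorm_eq_self, one_div] at hC ⊢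
  rw [ENNReal.rpow_inv_le_iff hq']
  calc ∫⁻ x, eLpNorm (fun t ↦ G (x, t)) s ν ^ (q : ℝ) ∂μ
      ≤ ∫⁻ x, Filter.liminf (fun n ↦ eLpNorm (fun t ↦ F n (x, t)) s ν ^ (q : ℝ))
          Filter.atTop ∂μ := by
        simp only [← rpow_liminf hq']
        gcongr with x
        exact hinner x
    _ ≤ Filter.liminf (fun n ↦ ∫⁻ x, eLpNorm (fun t ↦ F n (x, t)) s ν ^ (q : ℝ) ∂μ)
          Filter.atTop := lintegral_liminf_le fun n ↦ (hmeas n).pow_const _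
    _ ≤ C ^ (q : ℝ) := by
        refine Filter.liminf_le_of_le (by isBoundedDefault) fun b hb ↦ ?_
        obtain ⟨n, hn⟩ := hb.exists
        exact hn.trans ((ENNReal.rpow_inv_le_iff hq').1 (hC n))

end Fatou

section LogTruncation

variable {α : Type*}

/-- The set where `r` is nonzero with logarithm at most `n` in absolute value; these sets exhaust
the support of `r`. -/
def logLevel (r : α → ℝ) (n : ℕ) : Set α := {a | r a ≠ 0 ∧ |Real.log (r a)| ≤ n}

lemma measurableSet_logLevel [MeasurableSpace α] {r : α → ℝ} (hr : Measurable r) (n : ℕ) :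
    MeasurableSet (logLevel r n) :=
  (measurableSet_support hr).inter
    (measurableSet_le (by fun_prop : Measurable fun a ↦ |Real.log (r a)|) measurable_const)

lemma eventually_mem_logLevel {r : α → ℝ} {a : α} (ha : r a ≠ 0) :
    ∀ᶠ n in Filter.atTop, a ∈ logLevel r n := by
  filter_upwards [Filter.eventually_ge_atTop ⌈|Real.log (r a)|⌉₊] with n hn
  exact ⟨ha, Nat.ceil_le.1 hn⟩

lemma abs_log_norm_indicator_le {f : α → ℂ} {s : Set α} {n : ℕ}
    (hs : s ⊆ logLevel (fun a ↦ ‖f a‖) n) (a : α) : |Real.log ‖s.indicator f a‖| ≤ n := by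
  by_cases ha : a ∈ s
  · simpa [ha] using (hs ha).2
  · simp [ha]

lemma tendsto_indicator_of_eventually_mem {f : α → ℂ} {s : ℕ → Set α} {a : α}
    (hs : f a ≠ 0 → ∀ᶠ n in Filter.atTop, a ∈ s n) :
    Filter.Tendsto (fun n ↦ (s n).indicator f a) Filter.atTop (nhds (f a)) := by
  refine Filter.Tendsto.congr' ?_ tendsto_const_nhds
  by_cases ha : f a = 0
  · exact .of_forall fun n ↦ by simp [indicator, ha]
  · filter_upwards [hs ha] with n hn
    rw [indicator_of_mem hn]

end LogTruncation

section FiberTruncation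

variable {X τ : Type*} [MeasurableSpace X] [MeasurableSpace τ] {μ : Measure X} {ν : Measure τ}
  {F : X × τ → ℂ} {p q : ℝ≥0}

/-- The fibrewise `L^p` norm of `F`, with the junk value `0` where it is infinite. -/
def fiberNorm (p : ℝ≥0) (ν : Measure τ) (F : X × τ → ℂ) (x : X) : ℝ≥0 :=
  (eLpNorm (fun t ↦ F (x, t)) p ν).toNNReal

lemma measurable_fiberNorm [SFinite ν] (hp : p ≠ 0) (hF : Measurable F) :
    Measurable (fiberNorm p ν F) := by
  unfold fiberNorm
  simp only [eLpNorm_nnreal_eq_lintegral hp]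
  fun_prop

lemma coe_fiberNorm [IsFiniteMeasure ν] (hF : Measurable F) {n : ℕ}
    (hF_log : ∀ ω, |Real.log ‖F ω‖| ≤ n) (x : X) :
    (fiberNorm p ν F x : ℝ≥0∞) = eLpNorm (fun t ↦ F (x, t)) p ν :=
  ENNReal.coe_toNNReal (MemLp.of_bound
    (hF.comp measurable_prodMk_left).aestronglyMeasurable (Real.exp n) (.of_forall fun t ↦
      (Real.le_exp_log _).trans
        (Real.exp_le_exp.2 ((le_abs_self _).trans (hF_log (x, t)))))).2.ne

/-- The part of `F` over the set where the logarithm of its fibrewise `L^p` norm is at most `m`. -/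
def fiberTrunc (p : ℝ≥0) (ν : Measure τ) (F : X × τ → ℂ) (m : ℕ) : X × τ → ℂ :=
  (logLevel (fun x ↦ (fiberNorm p ν F x : ℝ)) m ×ˢ univ).indicator F

lemma isFiberNormed_fiberTrunc [IsFiniteMeasure ν] (hp : p ≠ 0) (hF : Measurable F) {n : ℕ}
    (hF_log : ∀ ω, |Real.log ‖F ω‖| ≤ n) {S : Set X} (hS : μ S < ∞)
    (hFS : ∀ ω, ω.1 ∉ S → F ω = 0) (m : ℕ) :
    IsFiberNormed μ ν p (max n m) (fiberTrunc p ν F m)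
      ((logLevel (fun x ↦ (fiberNorm p ν F x : ℝ)) m).indicator (fiberNorm p ν F)) := by
  have hN := measurable_fiberNorm (ν := ν) hp hF
  have hA : MeasurableSet (logLevel (fun x ↦ (fiberNorm p ν F x : ℝ)) m) :=
    measurableSet_logLevel (by fun_prop) m
  unfold fiberTrunc
  set A := logLevel (fun x ↦ (fiberNorm p ν F x : ℝ)) m
  refine ⟨hF.indicator (hA.prod .univ), hN.indicator hA, fun x ↦ ?_, fun x t hx ↦ ?_,
    fun ω ↦ ?_, fun x ↦ ?_, (measure_mono fun x hx ↦ ?_).trans_lt hS⟩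
  · by_cases hx : x ∈ A
    · simp only [indicator, mem_prod, hx, mem_univ, and_self, if_true, coe_fiberNorm hF hF_log]
      rw [eLpNorm_nnreal_eq_lintegral hp, ← ENNReal.rpow_mul, one_div_mul_cancel (by positivity),
        ENNReal.rpow_one]
    · simp [indicator, hx, pos_iff_ne_zero.2 hp]
  · refine indicator_of_notMem (fun hmem ↦ hmem.1.1 ?_) F
    simpa [indicator_of_mem hmem.1] using hx
  · by_cases hω : ω ∈ A ×ˢ univ
    · rw [indicator_of_mem hω]
      exact (hF_log ω).trans (le_max_left _ _)
    · simp [indicator_of_notMem hω]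
  · by_cases hx : x ∈ A
    · rw [indicator_of_mem hx]
      exact hx.2.trans (le_max_right _ _)
    · simp [hx]
  · by_contra hxS
    exact (mem_of_indicator_ne_zero hx).1 (by simp [fiberNorm, hFS (x, _) hxS])

lemma tendsto_fiberTrunc [IsFiniteMeasure ν] (hp : p ≠ 0) (hF : Measurable F) {n : ℕ}
    (hF_log : ∀ ω, |Real.log ‖F ω‖| ≤ n) (x : X) :
    ∀ᵐ t ∂ν, Filter.Tendsto (fun m ↦ fiberTrunc p ν F m (x, t)) Filter.atTop
      (nhds (F (x, t))) := by
  have hN := coe_fiberNorm (p := p) (ν := ν) hF hF_log x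
  rcases eq_or_ne (fiberNorm p ν F x) 0 with hx | hx
  · rw [hx, ENNReal.coe_zero] at hN
    have hzero := (eLpNorm_eq_zero_iff (hF.comp measurable_prodMk_left).aestronglyMeasurable
      (by exact_mod_cast hp)).1 hN.symm
    filter_upwards [hzero] with t ht
    exact tendsto_indicator_of_eventually_mem fun h ↦ absurd ht h
  · refine .of_forall fun t ↦ tendsto_indicator_of_eventually_mem fun _ ↦ ?_
    filter_upwards [eventually_mem_logLevel (NNReal.coe_ne_zero.2 hx)] with m hm
    exact ⟨hm, mem_univ t⟩

lemma eLpMixedNorm_le_of_forall_isFiberNormed [SigmaFinite μ] [IsFiniteMeasure ν] (hp : p ≠ 0)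
    (hq : q ≠ 0) (hF : Measurable F) {C : ℝ≥0∞}
    (hC : ∀ Λ G N, IsFiberNormed μ ν p Λ G N → (∀ ω, G ω ≠ 0 → G ω = F ω) →
      eLpMixedNorm q p μ ν G ≤ C) :
    eLpMixedNorm q p μ ν F ≤ C := by
  let S (n : ℕ) : Set (X × τ) := spanningSets μ n ×ˢ univ ∩ logLevel (fun ω ↦ ‖F ω‖) n
  have hS (n : ℕ) : MeasurableSet (S n) :=
    ((measurableSet_spanningSets μ n).prod .univ).inter (measurableSet_logLevel hF.norm n)
  have hS_log (n : ℕ) := abs_log_norm_indicator_le (f := F) (s := S n) inter_subset_right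
  refine eLpMixedNorm_le_of_tendsto (F := fun n ↦ (S n).indicator F)
    (fun n ↦ hF.indicator (hS n)) (fun x ↦ .of_forall fun t ↦ ?_) hq hp fun n ↦ ?_
  · refine tendsto_indicator_of_eventually_mem fun hFx ↦ ?_
    filter_upwards [eventually_mem_logLevel (r := fun ω ↦ ‖F ω‖) (norm_ne_zero_iff.2 hFx),
      Filter.eventually_ge_atTop (spanningSetsIndex μ x)] with n hn hnx
    exact ⟨⟨monotone_spanningSets μ hnx (mem_spanningSetsIndex μ x), mem_univ t⟩, hn⟩
  · have hG := isFiberNormed_fiberTrunc (μ := μ) (ν := ν) hp (hF.indicator (hS n)) (hS_log n)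
      (measure_spanningSets_lt_top μ n) (fun ω hω ↦ indicator_of_notMem (fun h ↦ hω h.1.1) F)
    refine eLpMixedNorm_le_of_tendsto (fun m ↦ (hG m).measurable)
      (tendsto_fiberTrunc hp (hF.indicator (hS n)) (hS_log n)) hq hp
      fun m ↦ hC _ _ _ (hG m) fun ω hω ↦ ?_
    have hω_fiber := mem_of_indicator_ne_zero hω
    rw [fiberTrunc, indicator_of_mem hω_fiber] at hω ⊢
    exact indicator_of_mem (mem_of_indicator_ne_zero hω) F

end FiberTruncation

section MixedBound

variable {X τ Y : Type*} [MeasurableSpace X] [MeasurableSpace τ] [MeasurableSpace Y]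
  {μ : Measure X} {ν : Measure τ} {η : Measure Y} {k : (X × τ) × Y → ℂ} {p q s : ℝ≥0}

lemma eLpMixedNorm_const_mul (hq : q ≠ 0) (c : ℂ) (F : X × τ → ℂ) :
    eLpMixedNorm q s μ ν (fun ω ↦ c * F ω) = ‖c‖ₑ * eLpMixedNorm q s μ ν F := by
  have hinner (x : X) : eLpNorm (fun t ↦ c * F (x, t)) s ν =
      ‖c‖ₑ * eLpNorm (fun t ↦ F (x, t)) s ν := eLpNorm_const_smul c _ s ν
  have hq' : (q : ℝ) ≠ 0 := by exact_mod_cast hq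
  simp only [eLpMixedNorm, hinner, eLpNorm_nnreal_eq_lintegral hq, enorm_eq_self]
  simp only [ENNReal.mul_rpow_of_nonneg _ _ q.coe_nonneg]
  rw [lintegral_const_mul' _ _ (ENNReal.rpow_ne_top_of_nonneg q.coe_nonneg enorm_ne_top),
    ENNReal.mul_rpow_of_nonneg _ _ (by positivity), ← ENNReal.rpow_mul, mul_one_div_cancel hq',
    ENNReal.rpow_one]

lemma tendsto_kernelOp {Ω : Type*} [MeasurableSpace Ω] {k : Ω × Y → ℂ} (hk : Measurable k) {B : ℝ}
    (hB : ∀ z, ‖k z‖ ≤ B) {fn : ℕ → Y → ℂ} {f : Y → ℂ} {g : Y → ℝ} (hfn : ∀ n, Measurable (fn n))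
    (hg : Integrable g η) (hfg : ∀ n y, ‖fn n y‖ ≤ g y)
    (hf : ∀ y, Filter.Tendsto (fun n ↦ fn n y) Filter.atTop (nhds (f y))) (ω : Ω) :
    Filter.Tendsto (fun n ↦ kernelOp η k (fn n) ω) Filter.atTop (nhds (kernelOp η k f ω)) := by
  refine tendsto_integral_of_dominated_convergence (fun y ↦ B * g y) (fun n ↦ ?_)
    (hg.const_mul B) (fun n ↦ .of_forall fun y ↦ ?_) (.of_forall fun y ↦ (hf y).const_mul _)
  · have := hfn n
    exact Measurable.aestronglyMeasurable (by fun_prop)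
  · rw [norm_mul]
    exact mul_le_mul (hB _) (hfg n y) (norm_nonneg _) ((norm_nonneg _).trans (hB (ω, y)))

namespace HasMixedBound

lemma of_unit_ball {p : ℝ≥0∞} (hp : p ≠ 0) (hq : q ≠ 0) {M : ℝ≥0∞}
    (h : ∀ f : Y → ℂ, Measurable f → Integrable f η → eLpNorm f p η ≤ 1 →
      eLpMixedNorm q s μ ν (kernelOp η k f) ≤ M) : HasMixedBound μ ν η k p q s M := by
  intro f hf hfi hfp
  have hop (c : ℂ) : kernelOp η k (fun y ↦ c * f y) = fun ω ↦ c * kernelOp η k f ω := by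
    ext ω
    simp only [kernelOp, mul_left_comm _ c, integral_const_mul]
  rcases eq_or_ne (eLpNorm f p η) 0 with hf0 | hf0
  · have hf_ae : f =ᵐ[η] 0 := (eLpNorm_eq_zero_iff hf.aestronglyMeasurable hp).1 hf0
    have hop_zero : kernelOp η k f = fun _ ↦ 0 := by
      ext ω
      exact integral_eq_zero_of_ae (hf_ae.mono fun y hy ↦ by simp [hy])
    simp [hop_zero, eLpMixedNorm]
  obtain ⟨c, hc⟩ : ∃ c : ℂ, ‖c‖ₑ = eLpNorm f p η :=
    ⟨(eLpNorm f p η).toReal, by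
      rw [← ofReal_norm, Complex.norm_real, Real.norm_of_nonneg ENNReal.toReal_nonneg,
        ENNReal.ofReal_toReal hfp.2.ne]⟩
  have hc0 : c ≠ 0 := enorm_ne_zero.1 (hc ▸ hf0)
  have hscaled := h (fun y ↦ c⁻¹ * f y) (hf.const_mul _) (hfi.const_mul _) <| by
    rw [show (fun y ↦ c⁻¹ * f y) = c⁻¹ • f from rfl, eLpNorm_const_smul, ← hc,
      enorm_inv hc0, ENNReal.inv_mul_cancel (enorm_ne_zero.2 hc0) enorm_ne_top]
  rw [← hc, mul_comm]
  calc eLpMixedNorm q s μ ν (kernelOp η k f)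
      = ‖c‖ₑ * eLpMixedNorm q s μ ν (kernelOp η k fun y ↦ c⁻¹ * f y) := by
        rw [← eLpMixedNorm_const_mul hq]
        simp only [hop, mul_inv_cancel_left₀ hc0]
    _ ≤ ‖c‖ₑ * M := by gcongr

variable [SigmaFinite μ] [IsFiniteMeasure ν] [SFinite η] {B : ℝ} {M₀ M₁ : ℝ≥0}

lemma eLpMixedNorm_le_of_abs_log_le {p₀ q₀ : ℝ≥0} {lam u : ℝ} (hk : Measurable k)
    (hB : ∀ z, ‖k z‖ ≤ B)
    (hM_fiber : ∀ x y, ∫⁻ t, ‖k ((x, t), y)‖ₑ ∂ν ≤ M₁) (hM : ∀ ω, ∫⁻ y, ‖k (ω, y)‖ₑ ∂η ≤ M₁)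
    (hp₀ : 1 ≤ p₀) (hq₀ : 1 ≤ q₀) (h₀ : HasMixedBound μ ν η k p₀ q₀ p₀ M₀)
    (hlam : lam ∈ Icc (0 : ℝ) 1) (hu : u ∈ Icc (0 : ℝ) 1) (hp : p ≠ 0) (hq : q ≠ 0)
    (hp_eq : 1 / (p : ℝ) = lam / p₀ + (1 - lam) * u) (hq_eq : 1 / (q : ℝ) = lam / q₀)
    {f : Y → ℂ} (hf : Measurable f) (hfi : Integrable f η) {Λ : ℝ}
    (hf_log : ∀ y, |Real.log ‖f y‖| ≤ Λ) (hf_le : eLpNorm f p η ≤ 1) :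
    eLpMixedNorm q p μ ν (kernelOp η k f) ≤ M₀ ^ lam * M₁ ^ (1 - lam) := by
  have hp' : (0 : ℝ) < p := by positivity
  refine eLpMixedNorm_le_of_forall_isFiberNormed hp hq (measurable_kernelOp hk hf)
    fun Λ' G N hG hGf ↦ ?_
  have hfiber (x : X) :
      (∫⁻ t, ‖G (x, t)‖ₑ ^ (p : ℝ) ∂ν) ^ (1 / (p : ℝ)) = (N x : ℝ≥0∞) := by
    rw [hG.lintegral_fiber, ← ENNReal.rpow_mul, mul_one_div_cancel hp'.ne', ENNReal.rpow_one]
  rw [eLpMixedNorm_nnreal_eq_lintegral hq hp]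
  simp only [hfiber]
  exact (hG.mono (le_max_right Λ Λ')).lintegral_rpow_le hp' (by positivity) hk hB hM_fiber hM
    hp₀ hq₀ h₀ hlam hu hp_eq hq_eq hf hfi (fun y ↦ (hf_log y).trans (le_max_left Λ Λ'))
    ((eLpNorm_le_one_iff hp).1 hf_le) hGf

lemma interpolate {p₀ q₀ : ℝ≥0} {lam u : ℝ} (hk : Measurable k) (hB : ∀ z, ‖k z‖ ≤ B)
    (hM_fiber : ∀ x y, ∫⁻ t, ‖k ((x, t), y)‖ₑ ∂ν ≤ M₁) (hM : ∀ ω, ∫⁻ y, ‖k (ω, y)‖ₑ ∂η ≤ M₁)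
    (hp₀ : 1 ≤ p₀) (hq₀ : 1 ≤ q₀) (h₀ : HasMixedBound μ ν η k p₀ q₀ p₀ M₀)
    (hlam : lam ∈ Icc (0 : ℝ) 1) (hu : u ∈ Icc (0 : ℝ) 1) (hp : p ≠ 0) (hq : q ≠ 0)
    (hp_eq : 1 / (p : ℝ) = lam / p₀ + (1 - lam) * u) (hq_eq : 1 / (q : ℝ) = lam / q₀) :
    HasMixedBound μ ν η k p q p (M₀ ^ lam * M₁ ^ (1 - lam)) := by
  refine of_unit_ball (by exact_mod_cast hp) hq fun f hf hfi hf_le ↦ ?_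
  let fn (n : ℕ) : Y → ℂ := (logLevel (fun y ↦ ‖f y‖) n).indicator f
  have hset (n : ℕ) : MeasurableSet (logLevel (fun y ↦ ‖f y‖) n) :=
    measurableSet_logLevel hf.norm n
  refine eLpMixedNorm_le_of_tendsto (F := fun n ↦ kernelOp η k (fn n))
    (fun n ↦ measurable_kernelOp hk (hf.indicator (hset n)))
    (fun x ↦ .of_forall fun t ↦ ?_) hq hp fun n ↦ ?_
  · exact tendsto_kernelOp hk hB (fun n ↦ hf.indicator (hset n)) hfi.norm
      (fun n y ↦ norm_indicator_le_norm_self f y) (fun y ↦ tendsto_indicator_of_eventually_mem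
        fun hfy ↦ eventually_mem_logLevel (norm_ne_zero_iff.2 hfy)) (x, t)
  · exact eLpMixedNorm_le_of_abs_log_le hk hB hM_fiber hM hp₀ hq₀ h₀ hlam hu hp hq hp_eq hq_eq
      (hf.indicator (hset n)) (hfi.indicator (hset n))
      (abs_log_norm_indicator_le subset_rfl) ((eLpNorm_indicator_le f).trans hf_le)

end HasMixedBound

end MixedBound

section Schur

variable {X τ Y : Type*} [MeasurableSpace X] [MeasurableSpace τ] [MeasurableSpace Y]
  {μ : Measure X} {ν : Measure τ} {η : Measure Y} {k : (X × τ) × Y → ℂ}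

lemma rpow_lintegral_mul_le {w g : Y → ℝ≥0∞} (hw : Measurable w) (hg : Measurable g) {p : ℝ}
    (hp : 1 ≤ p) :
    (∫⁻ y, w y * g y ∂η) ^ p ≤ (∫⁻ y, w y ∂η) ^ (p - 1) * ∫⁻ y, w y * g y ^ p ∂η := by
  have hp₀ : 0 < p := one_pos.trans_le hp
  have hinv : 0 ≤ 1 / p := by positivity
  have hinv' : 0 ≤ 1 - 1 / p := sub_nonneg.2 ((div_le_one hp₀).2 hp)
  have hfactor (y : Y) : w y * g y = (w y * g y ^ p) ^ (1 / p) * w y ^ (1 - 1 / p) := by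
    rw [ENNReal.mul_rpow_of_nonneg _ _ hinv, ← ENNReal.rpow_mul, mul_one_div_cancel hp₀.ne',
      ENNReal.rpow_one, mul_right_comm, ← ENNReal.rpow_add_of_nonneg _ _ hinv hinv',
      add_sub_cancel, ENNReal.rpow_one]
  calc (∫⁻ y, w y * g y ∂η) ^ p
      ≤ ((∫⁻ y, w y * g y ^ p ∂η) ^ (1 / p) * (∫⁻ y, w y ∂η) ^ (1 - 1 / p)) ^ p := by
        simp only [hfactor]
        gcongr
        exact ENNReal.lintegral_mul_norm_pow_le (by fun_prop) (by fun_prop) hinv hinv'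
          (add_sub_cancel _ _)
    _ = (∫⁻ y, w y ∂η) ^ (p - 1) * ∫⁻ y, w y * g y ^ p ∂η := by
        rw [ENNReal.mul_rpow_of_nonneg _ _ hp₀.le, ← ENNReal.rpow_mul, ← ENNReal.rpow_mul,
          one_div_mul_cancel hp₀.ne', ENNReal.rpow_one, mul_comm, sub_mul,
          one_div_mul_cancel hp₀.ne', one_mul]

lemma enorm_kernelOp_le {Ω : Type*} (k : Ω × Y → ℂ) (f : Y → ℂ) (ω : Ω) :
    ‖kernelOp η k f ω‖ₑ ≤ ∫⁻ y, ‖k (ω, y)‖ₑ * ‖f y‖ₑ ∂η :=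
  (enorm_integral_le_lintegral_enorm _).trans_eq (by simp only [enorm_mul])

lemma lintegral_rpow_kernelOp_le [SFinite ν] [SFinite η] {M₁ : ℝ≥0} (hk : Measurable k)
    (hM_fiber : ∀ x y, ∫⁻ t, ‖k ((x, t), y)‖ₑ ∂ν ≤ M₁) (hM : ∀ ω, ∫⁻ y, ‖k (ω, y)‖ₑ ∂η ≤ M₁)
    {p : ℝ} (hp : 1 ≤ p) {f : Y → ℂ} (hf : Measurable f) (x : X) :
    ∫⁻ t, ‖kernelOp η k f (x, t)‖ₑ ^ p ∂ν ≤ (M₁ : ℝ≥0∞) ^ p * ∫⁻ y, ‖f y‖ₑ ^ p ∂η := by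
  have hp' : 0 ≤ p - 1 := sub_nonneg.2 hp
  calc ∫⁻ t, ‖kernelOp η k f (x, t)‖ₑ ^ p ∂ν
      ≤ ∫⁻ t, (M₁ : ℝ≥0∞) ^ (p - 1) * ∫⁻ y, ‖k ((x, t), y)‖ₑ * ‖f y‖ₑ ^ p ∂η ∂ν := by
        refine lintegral_mono fun t ↦ ?_
        calc ‖kernelOp η k f (x, t)‖ₑ ^ p ≤ (∫⁻ y, ‖k ((x, t), y)‖ₑ * ‖f y‖ₑ ∂η) ^ p := by
              gcongr
              exact enorm_kernelOp_le k f _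
          _ ≤ _ := rpow_lintegral_mul_le (by fun_prop) (by fun_prop) hp
          _ ≤ _ := by gcongr; exact hM _
    _ = (M₁ : ℝ≥0∞) ^ (p - 1) * ∫⁻ y, ∫⁻ t, ‖k ((x, t), y)‖ₑ * ‖f y‖ₑ ^ p ∂ν ∂η := by
        rw [lintegral_const_mul' _ _ (ENNReal.rpow_ne_top_of_nonneg hp' ENNReal.coe_ne_top),
          lintegral_lintegral_swap (Measurable.aemeasurable (by fun_prop))]
    _ ≤ (M₁ : ℝ≥0∞) ^ (p - 1) * ∫⁻ y, M₁ * ‖f y‖ₑ ^ p ∂η := by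
        gcongr with y
        rw [lintegral_mul_const _ (by fun_prop)]
        gcongr
        exact hM_fiber x y
    _ = (M₁ : ℝ≥0∞) ^ p * ∫⁻ y, ‖f y‖ₑ ^ p ∂η := by
        rw [lintegral_const_mul _ (by fun_prop), ← mul_assoc]
        congr 1
        nth_rw 2 [← ENNReal.rpow_one (M₁ : ℝ≥0∞)]
        rw [← ENNReal.rpow_add_of_nonneg _ _ hp' zero_le_one, sub_add_cancel]

lemma measure_univ_rpow_ne_top [IsFiniteMeasure ν] {r s : ℝ≥0∞} (hr : r ≠ 0) (hrs : r ≤ s) :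
    (ν univ) ^ (1 / r.toReal - 1 / s.toReal) ≠ ∞ := by
  refine ENNReal.rpow_ne_top_of_nonneg (sub_nonneg.2 ?_) (measure_ne_top _ _)
  rcases eq_or_ne s ∞ with rfl | hs
  · simp
  · exact one_div_le_one_div_of_le (ENNReal.toReal_pos hr (ne_top_of_le_ne_top hs hrs))
      (ENNReal.toReal_mono hs hrs)

namespace HasMixedBound

lemma top_right [SFinite ν] [SFinite η] {M₁ : ℝ≥0} (hk : Measurable k)
    (hM_fiber : ∀ x y, ∫⁻ t, ‖k ((x, t), y)‖ₑ ∂ν ≤ M₁) (hM : ∀ ω, ∫⁻ y, ‖k (ω, y)‖ₑ ∂η ≤ M₁)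
    {p : ℝ≥0∞} (hp : 1 ≤ p) : HasMixedBound μ ν η k p ∞ p M₁ := by
  intro f hf _ _
  refine (eLpNorm_exponent_top.trans_le
    (eLpNormEssSup_le_of_ae_enorm_bound (.of_forall fun x ↦ ?_)))
  rw [enorm_eq_self]
  induction p with
  | top =>
    refine eLpNorm_exponent_top.trans_le
      (eLpNormEssSup_le_of_ae_enorm_bound (.of_forall fun t ↦ ?_))
    calc ‖kernelOp η k f (x, t)‖ₑ ≤ ∫⁻ y, ‖k ((x, t), y)‖ₑ * eLpNorm f ∞ η ∂η :=
          (enorm_kernelOp_le k f _).trans <| lintegral_mono_ae <| by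
            filter_upwards [ae_le_eLpNormEssSup (f := f) (μ := η)] with y hy
            gcongr
            exact hy.trans_eq eLpNorm_exponent_top.symm
      _ = (∫⁻ y, ‖k ((x, t), y)‖ₑ ∂η) * eLpNorm f ∞ η := lintegral_mul_const _ (by fun_prop)
      _ ≤ M₁ * eLpNorm f ∞ η := by gcongr; exact hM _
  | coe p =>
    have hp' : (1 : ℝ) ≤ p := by exact_mod_cast hp
    have hp₀ : p ≠ 0 := by rintro rfl; simp at hp
    rw [eLpNorm_nnreal_eq_lintegral hp₀, eLpNorm_nnreal_eq_lintegral hp₀]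
    calc (∫⁻ t, ‖kernelOp η k f (x, t)‖ₑ ^ (p : ℝ) ∂ν) ^ (1 / (p : ℝ))
        ≤ ((M₁ : ℝ≥0∞) ^ (p : ℝ) * ∫⁻ y, ‖f y‖ₑ ^ (p : ℝ) ∂η) ^ (1 / (p : ℝ)) := by
          gcongr
          exact lintegral_rpow_kernelOp_le hk hM_fiber hM hp' hf x
      _ = M₁ * (∫⁻ y, ‖f y‖ₑ ^ (p : ℝ) ∂η) ^ (1 / (p : ℝ)) := by
          rw [ENNReal.mul_rpow_of_nonneg _ _ (by positivity), ← ENNReal.rpow_mul,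
            mul_one_div_cancel (by positivity), ENNReal.rpow_one]

end HasMixedBound

end Schur

section MixedBoundAlgebra

variable {X τ Y : Type*} [MeasurableSpace X] [MeasurableSpace τ] [MeasurableSpace Y]
  {μ : Measure X} {ν : Measure τ} {η : Measure Y} {k k' : (X × τ) × Y → ℂ}

lemma measurable_eLpNorm_fiber [SFinite ν] {s : ℝ≥0} (hs : s ≠ 0) {F : X × τ → ℂ}
    (hF : Measurable F) : Measurable fun x ↦ eLpNorm (fun t ↦ F (x, t)) s ν := by
  simp only [eLpNorm_nnreal_eq_lintegral hs]
  fun_prop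

lemma eLpMixedNorm_add_le [SFinite ν] {q : ℝ≥0∞} {s : ℝ≥0} (hq : 1 ≤ q) (hs : 1 ≤ s)
    {F G : X × τ → ℂ} (hF : Measurable F) (hG : Measurable G) :
    eLpMixedNorm q s μ ν (fun ω ↦ F ω + G ω) ≤ eLpMixedNorm q s μ ν F + eLpMixedNorm q s μ ν G := by
  have hs₀ : s ≠ 0 := (one_pos.trans_le hs).ne'
  have hfiber (x : X) : eLpNorm (fun t ↦ F (x, t) + G (x, t)) s ν ≤
      eLpNorm (fun t ↦ F (x, t)) s ν + eLpNorm (fun t ↦ G (x, t)) s ν :=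
    eLpNorm_add_le (Measurable.aestronglyMeasurable (by fun_prop))
      (Measurable.aestronglyMeasurable (by fun_prop)) (by exact_mod_cast hs)
  refine (eLpNorm_mono_enorm fun x ↦ ?_).trans (eLpNorm_add_le
    (measurable_eLpNorm_fiber hs₀ hF).aestronglyMeasurable
    (measurable_eLpNorm_fiber hs₀ hG).aestronglyMeasurable hq)
  simpa only [enorm_eq_self, Pi.add_apply] using hfiber x

namespace HasMixedBound

lemma mono {p q s M M' : ℝ≥0∞} (h : HasMixedBound μ ν η k p q s M) (hM : M ≤ M') :
    HasMixedBound μ ν η k p q s M' :=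
  fun f hf hfi hfp ↦ (h f hf hfi hfp).trans (by gcongr)

lemma neg {p q s M : ℝ≥0∞} (h : HasMixedBound μ ν η k p q s M) :
    HasMixedBound μ ν η (-k) p q s M := by
  intro f hf hfi hfp
  have hneg : kernelOp η (-k) f = -kernelOp η k f := by
    ext ω
    simp only [kernelOp, Pi.neg_apply, neg_mul, integral_neg]
  have hfiber (x : X) : eLpNorm (fun t ↦ (-kernelOp η k f) (x, t)) s ν =
      eLpNorm (fun t ↦ kernelOp η k f (x, t)) s ν :=
    eLpNorm_neg _ _ _
  simpa only [eLpMixedNorm, hneg, hfiber] using h f hf hfi hfp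

lemma mono_inner [IsFiniteMeasure ν] [SFinite η] {p q r s M : ℝ≥0∞} (hk : Measurable k)
    (hr : r ≠ 0) (hrs : r ≤ s) (h : HasMixedBound μ ν η k p q s M) :
    HasMixedBound μ ν η k p q r ((ν univ) ^ (1 / r.toReal - 1 / s.toReal) * M) := by
  intro f hf hfi hfp
  set c := (ν univ) ^ (1 / r.toReal - 1 / s.toReal)
  have hc_top : c ≠ ∞ := measure_univ_rpow_ne_top hr hrs
  have hfiber (x : X) : eLpNorm (fun t ↦ kernelOp η k f (x, t)) r ν ≤
      c * eLpNorm (fun t ↦ kernelOp η k f (x, t)) s ν := by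
    rw [mul_comm]
    exact eLpNorm_le_eLpNorm_mul_rpow_measure_univ hrs
      ((measurable_kernelOp hk hf).comp measurable_prodMk_left).aestronglyMeasurable
  calc eLpMixedNorm q r μ ν (kernelOp η k f) ≤ c * eLpMixedNorm q s μ ν (kernelOp η k f) := by
        clear_value c
        lift c to ℝ≥0 using hc_top
        exact eLpNorm_le_mul_eLpNorm_of_ae_le_mul' (.of_forall fun x ↦ by simpa using hfiber x) q
    _ ≤ c * (M * eLpNorm f p η) := by gcongr; exact h f hf hfi hfp
    _ = c * M * eLpNorm f p η := (mul_assoc _ _ _).symm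

lemma add [SFinite ν] [SFinite η] {p q M M' : ℝ≥0∞} {s : ℝ≥0} (hq : 1 ≤ q) (hs : 1 ≤ s)
    (hk : Measurable k) (hk' : Measurable k') {B : ℝ} (hB : ∀ z, ‖k z‖ ≤ B)
    (hB' : ∀ z, ‖k' z‖ ≤ B) (h : HasMixedBound μ ν η k p q s M)
    (h' : HasMixedBound μ ν η k' p q s M') :
    HasMixedBound μ ν η (fun z ↦ k z + k' z) p q s (M + M') := by
  intro f hf hfi hfp
  have hsum : kernelOp η (fun z ↦ k z + k' z) f = fun ω ↦ kernelOp η k f ω + kernelOp η k' f ω := by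
    ext ω
    simp only [kernelOp, add_mul]
    exact integral_add
      (hfi.bdd_mul (Measurable.aestronglyMeasurable (by fun_prop)) (.of_forall fun y ↦ hB (ω, y)))
      (hfi.bdd_mul (Measurable.aestronglyMeasurable (by fun_prop)) (.of_forall fun y ↦ hB' (ω, y)))
  calc eLpMixedNorm q s μ ν (kernelOp η (fun z ↦ k z + k' z) f)
      ≤ eLpMixedNorm q s μ ν (kernelOp η k f) + eLpMixedNorm q s μ ν (kernelOp η k' f) :=
        hsum ▸ eLpMixedNorm_add_le hq hs (measurable_kernelOp hk hf) (measurable_kernelOp hk' hf)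
    _ ≤ (M + M') * eLpNorm f p η := by
        rw [add_mul]
        gcongr
        exacts [h f hf hfi hfp, h' f hf hfi hfp]

end HasMixedBound

end MixedBoundAlgebra

section Young

variable {E τ : Type*} [MeasurableSpace E] [AddCommGroup E] [MeasurableAdd₂ E] [MeasurableNeg E]
  [MeasurableSpace τ] {μ : Measure E} [SFinite μ] [μ.IsAddLeftInvariant] {ν : Measure τ}

/-- The kernel of the convolution, in the first variable, with `K : E × τ → ℂ`. -/
def convKernel (K : E × τ → ℂ) (z : (E × τ) × E) : ℂ := K (z.1.1 - z.2, z.1.2)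

lemma measurable_convKernel {K : E × τ → ℂ} (hK : Measurable K) : Measurable (convKernel K) := by
  unfold convKernel
  fun_prop

lemma lintegral_rpow_conv_le_of_le_one {κ g : E → ℝ≥0∞} (hκ : Measurable κ) (hκ_le : ∀ v, κ v ≤ 1)
    (hg : Measurable g) (hg_le : ∫⁻ y, g y ∂μ ≤ 1) {e : ℝ} (he : 1 ≤ e) :
    ∫⁻ x, (∫⁻ y, κ (x - y) * g y ∂μ) ^ e ∂μ ≤ ∫⁻ v, κ v ∂μ := by
  have hconv_le (x : E) : ∫⁻ y, κ (x - y) * g y ∂μ ≤ 1 :=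
    (lintegral_mono fun y ↦ mul_le_of_le_one_left' (hκ_le _)).trans hg_le
  calc ∫⁻ x, (∫⁻ y, κ (x - y) * g y ∂μ) ^ e ∂μ ≤ ∫⁻ x, ∫⁻ y, κ (x - y) * g y ∂μ ∂μ :=
        lintegral_mono fun x ↦ ENNReal.rpow_le_self_of_le_one (hconv_le x) he
    _ = ∫⁻ y, ∫⁻ x, κ (x - y) * g y ∂μ ∂μ :=
        lintegral_lintegral_swap (Measurable.aemeasurable (by fun_prop))
    _ = ∫⁻ y, (∫⁻ v, κ v ∂μ) * g y ∂μ := by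
        refine lintegral_congr fun y ↦ ?_
        rw [lintegral_mul_const _ (by fun_prop), lintegral_sub_right_eq_self κ y]
    _ = (∫⁻ v, κ v ∂μ) * ∫⁻ y, g y ∂μ := lintegral_const_mul _ hg
    _ ≤ ∫⁻ v, κ v ∂μ := mul_le_of_le_one_right' hg_le

variable [μ.IsNegInvariant]

lemma lintegral_rpow_conv_le {κ g : E → ℝ≥0∞} (hκ : Measurable κ) (hκ_le : ∀ v, κ v ≤ 1)
    (hg : Measurable g) {p q : ℝ} (hp : 1 ≤ p) (hpq : p ≤ q) (hg_le : ∫⁻ y, g y ^ p ∂μ ≤ 1) :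
    ∫⁻ x, (∫⁻ y, κ (x - y) * g y ∂μ) ^ q ∂μ ≤ (∫⁻ v, κ v ∂μ) ^ ((p - 1) * (q / p) + 1) := by
  have hp₀ : 0 < p := one_pos.trans_le hp
  have hqp : 1 ≤ q / p := (one_le_div hp₀).2 hpq
  have hexp : 0 ≤ (p - 1) * (q / p) := mul_nonneg (sub_nonneg.2 hp) (by linarith)
  set J := ∫⁻ v, κ v ∂μ
  have hJ (x : E) : ∫⁻ y, κ (x - y) ∂μ = J := lintegral_sub_left_eq_self κ x
  calc ∫⁻ x, (∫⁻ y, κ (x - y) * g y ∂μ) ^ q ∂μ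
      ≤ ∫⁻ x, J ^ ((p - 1) * (q / p)) * (∫⁻ y, κ (x - y) * g y ^ p ∂μ) ^ (q / p) ∂μ := by
        refine lintegral_mono fun x ↦ ?_
        calc (∫⁻ y, κ (x - y) * g y ∂μ) ^ q
            = ((∫⁻ y, κ (x - y) * g y ∂μ) ^ p) ^ (q / p) := by
              rw [← ENNReal.rpow_mul, mul_div_cancel₀ _ hp₀.ne']
          _ ≤ (J ^ (p - 1) * ∫⁻ y, κ (x - y) * g y ^ p ∂μ) ^ (q / p) := by
              rw [← hJ x]
              gcongr
              exact rpow_lintegral_mul_le (by fun_prop) hg hp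
          _ = J ^ ((p - 1) * (q / p)) * (∫⁻ y, κ (x - y) * g y ^ p ∂μ) ^ (q / p) := by
              rw [ENNReal.mul_rpow_of_nonneg _ _ (by linarith), ← ENNReal.rpow_mul]
    _ = J ^ ((p - 1) * (q / p)) * ∫⁻ x, (∫⁻ y, κ (x - y) * g y ^ p ∂μ) ^ (q / p) ∂μ :=
        lintegral_const_mul _ (by fun_prop)
    _ ≤ J ^ ((p - 1) * (q / p)) * J := by
        gcongr
        exact lintegral_rpow_conv_le_of_le_one hκ hκ_le (by fun_prop) hg_le hqp
    _ = J ^ ((p - 1) * (q / p) + 1) := by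
        rw [ENNReal.rpow_add_of_nonneg _ _ hexp zero_le_one, ENNReal.rpow_one]

lemma hasMixedBound_convKernel_of_le [IsFiniteMeasure ν] {κ : E → ℝ≥0∞} (hκ : Measurable κ)
    (hκ_le : ∀ v, κ v ≤ 1) {K : E × τ → ℂ} {c : ℝ≥0} (hK : ∀ v t, ‖K (v, t)‖ₑ ≤ c * κ v)
    {p q s : ℝ≥0} (hp : 1 ≤ p) (hpq : p ≤ q) :
    HasMixedBound μ ν μ (convKernel K) p q s
      (c * (ν univ ^ (1 / (s : ℝ)) *
        (∫⁻ v, κ v ∂μ) ^ (((p - 1) * (q / p) + 1) * (1 / q) : ℝ))) := by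
  have hp₀ : p ≠ 0 := (one_pos.trans_le hp).ne'
  have hq₀ : q ≠ 0 := (one_pos.trans_le (hp.trans hpq)).ne'
  have hp' : (1 : ℝ) ≤ p := by exact_mod_cast hp
  have hpq' : (p : ℝ) ≤ q := by exact_mod_cast hpq
  refine HasMixedBound.of_unit_ball (by exact_mod_cast hp₀) hq₀ fun f hf _ hf_le ↦ ?_
  have hop (x : E) (t : τ) : ‖kernelOp μ (convKernel K) f (x, t)‖ₑ ≤
      c * ∫⁻ y, κ (x - y) * ‖f y‖ₑ ∂μ := by
    rw [← lintegral_const_mul' _ _ ENNReal.coe_ne_top]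
    refine (enorm_kernelOp_le _ _ _).trans (lintegral_mono fun y ↦ ?_)
    rw [← mul_assoc]
    gcongr
    exact hK _ _
  obtain ⟨b, hb⟩ : ∃ b : ℝ≥0, (b : ℝ≥0∞) = c * ν univ ^ (1 / (s : ℝ)) :=
    ⟨_, ENNReal.coe_toNNReal (ENNReal.mul_ne_top ENNReal.coe_ne_top
      (ENNReal.rpow_ne_top_of_nonneg (by positivity) (measure_ne_top _ _)))⟩
  have hfiber (x : E) : eLpNorm (fun t ↦ kernelOp μ (convKernel K) f (x, t)) s ν ≤
      b * ∫⁻ y, κ (x - y) * ‖f y‖ₑ ∂μ := by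
    refine (eLpNorm_le_of_ae_enorm_bound (.of_forall fun t ↦ hop x t)).trans_eq ?_
    rw [hb, smul_eq_mul, ENNReal.coe_toReal, one_div]
    ring
  have houter : eLpNorm (fun x ↦ ∫⁻ y, κ (x - y) * ‖f y‖ₑ ∂μ) q μ ≤
      (∫⁻ v, κ v ∂μ) ^ (((p - 1) * (q / p) + 1) * (1 / q) : ℝ) := by
    rw [ENNReal.rpow_mul, eLpNorm_nnreal_eq_lintegral hq₀]
    gcongr
    exact lintegral_rpow_conv_le hκ hκ_le (by fun_prop) hp' hpq'
      ((eLpNorm_le_one_iff hp₀).1 hf_le)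
  calc eLpMixedNorm q s μ ν (kernelOp μ (convKernel K) f)
      ≤ b * eLpNorm (fun x ↦ ∫⁻ y, κ (x - y) * ‖f y‖ₑ ∂μ) q μ :=
        eLpNorm_le_mul_eLpNorm_of_ae_le_mul' (.of_forall fun x ↦ by
          simpa only [enorm_eq_self] using hfiber x) q
    _ ≤ _ := by
        rw [hb, mul_assoc]
        gcongr

lemma exists_hasMixedBound_convKernel [IsFiniteMeasure ν] {κ : E → ℝ≥0∞} (hκ : Measurable κ)
    (hκ_le : ∀ v, κ v ≤ 1) (hκ_int : ∫⁻ v, κ v ∂μ ≠ ∞) {p q : ℝ≥0} (hp : 1 ≤ p) (hpq : p ≤ q)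
    (s : ℝ≥0) :
    ∃ T : ℝ≥0, ∀ (K : E × τ → ℂ) (c : ℝ≥0), (∀ v t, ‖K (v, t)‖ₑ ≤ c * κ v) →
      HasMixedBound μ ν μ (convKernel K) p q s (c * T) := by
  have hexp : (0 : ℝ) ≤ ((p - 1) * (q / p) + 1) * (1 / q) := by
    have := sub_nonneg.2 (show (1 : ℝ) ≤ p by exact_mod_cast hp)
    positivity
  refine ⟨(ν univ ^ (1 / (s : ℝ)) *
    (∫⁻ v, κ v ∂μ) ^ (((p - 1) * (q / p) + 1) * (1 / q) : ℝ)).toNNReal, fun K c hK ↦ ?_⟩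
  rw [ENNReal.coe_toNNReal (ENNReal.mul_ne_top
    (ENNReal.rpow_ne_top_of_nonneg (by positivity) (measure_ne_top _ _))
    (ENNReal.rpow_ne_top_of_nonneg hexp hκ_int))]
  exact hasMixedBound_convKernel_of_le hκ hκ_le hK hp hpq

end Young

section Localization

lemma eLpNorm_restrict_rpow_le {α : Type*} [MeasurableSpace α] {μ : Measure α} {f : α → ℂ}
    (hf : AEStronglyMeasurable f μ) {ρ p q : ℝ≥0} (hρ : ρ ≠ 0) (hρp : ρ ≤ p) (hpq : p ≤ q)
    (hf_le : ∫⁻ y, ‖f y‖ₑ ^ (p : ℝ) ∂μ ≤ 1) (S : Set α) :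
    eLpNorm f ρ (μ.restrict S) ^ (q : ℝ) ≤
      μ S ^ (q / ρ - q / p : ℝ) * ∫⁻ y in S, ‖f y‖ₑ ^ (p : ℝ) ∂μ := by
  have hp : p ≠ 0 := (pos_iff_ne_zero.2 hρ |>.trans_le hρp).ne'
  have hp' : (0 : ℝ) < p := by positivity
  have hqp : (1 : ℝ) ≤ q / p := (one_le_div hp').2 (by exact_mod_cast hpq)
  calc eLpNorm f ρ (μ.restrict S) ^ (q : ℝ)
      ≤ (eLpNorm f p (μ.restrict S) * μ S ^ (1 / (ρ : ℝ) - 1 / p)) ^ (q : ℝ) := by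
        gcongr
        simpa only [Measure.restrict_apply_univ, ENNReal.coe_toReal] using
          eLpNorm_le_eLpNorm_mul_rpow_measure_univ (ENNReal.coe_le_coe.2 hρp) hf.restrict
    _ = μ S ^ (q / ρ - q / p : ℝ) * (∫⁻ y in S, ‖f y‖ₑ ^ (p : ℝ) ∂μ) ^ (q / p : ℝ) := by
        rw [ENNReal.mul_rpow_of_nonneg _ _ q.coe_nonneg, ← ENNReal.rpow_mul, mul_comm,
          eLpNorm_nnreal_eq_lintegral hp, ← ENNReal.rpow_mul]
        congr 2 <;> ring
    _ ≤ _ := by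
        gcongr
        exact ENNReal.rpow_le_self_of_le_one ((setLIntegral_le_lintegral _ _).trans hf_le) hqp

variable {E τ : Type*} [NormedAddCommGroup E] [ProperSpace E] [MeasurableSpace E] [BorelSpace E]
  [MeasurableSpace τ] {μ : Measure E} [μ.IsAddHaarMeasure] {ν : Measure τ}

omit [μ.IsAddHaarMeasure] in
lemma measurable_indicator_ball {g : E → ℝ≥0∞} (hg : Measurable g) (r : ℝ) :
    Measurable fun z : E × E ↦ (ball z.1 r).indicator g z.2 :=
  (hg.comp measurable_snd).indicator (s := {z : E × E | dist z.2 z.1 < r})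
    (measurableSet_lt (by fun_prop) measurable_const)

omit [μ.IsAddHaarMeasure] in
lemma measurable_setLIntegral_ball [SFinite μ] {g : E → ℝ≥0∞} (hg : Measurable g) (r : ℝ) :
    Measurable fun a ↦ ∫⁻ x in ball a r, g x ∂μ := by
  simp_rw [← lintegral_indicator measurableSet_ball]
  exact (measurable_indicator_ball hg r).lintegral_prod_right'

lemma lintegral_setLIntegral_ball {g : E → ℝ≥0∞} (hg : Measurable g) (r : ℝ) :
    ∫⁻ a, ∫⁻ x in ball a r, g x ∂μ ∂μ = μ (ball 0 r) * ∫⁻ x, g x ∂μ := by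
  calc ∫⁻ a, ∫⁻ x in ball a r, g x ∂μ ∂μ = ∫⁻ a, ∫⁻ x, (ball a r).indicator g x ∂μ ∂μ := by
        simp_rw [lintegral_indicator measurableSet_ball]
    _ = ∫⁻ x, ∫⁻ a, (ball a r).indicator g x ∂μ ∂μ :=
        lintegral_lintegral_swap (measurable_indicator_ball hg r).aemeasurable
    _ = ∫⁻ x, μ (ball 0 r) * g x ∂μ := by
        refine lintegral_congr fun x ↦ ?_
        have hsymm (a : E) : (ball a r).indicator g x = (ball x r).indicator (fun _ ↦ g x) a := by
          simp only [indicator, mem_ball, dist_comm]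
        simp_rw [hsymm]
        rw [lintegral_indicator_const measurableSet_ball, mul_comm, Measure.addHaar_ball_center]
    _ = μ (ball 0 r) * ∫⁻ x, g x ∂μ := lintegral_const_mul _ hg

lemma lintegral_le_of_setLIntegral_ball_le {Φ g : E → ℝ≥0∞} (hΦ : Measurable Φ)
    (hg : Measurable g) {A : ℝ≥0∞} {r : ℝ}
    (h : ∀ a, ∫⁻ x in ball a 1, Φ x ∂μ ≤ A * ∫⁻ y in ball a r, g y ∂μ) :
    ∫⁻ x, Φ x ∂μ ≤ A * ((μ (ball 0 1))⁻¹ * (μ (ball 0 r) * ∫⁻ y, g y ∂μ)) := by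
  have hball : μ (ball 0 1) * ∫⁻ x, Φ x ∂μ ≤ A * (μ (ball 0 r) * ∫⁻ y, g y ∂μ) := by
    rw [← lintegral_setLIntegral_ball hΦ, ← lintegral_setLIntegral_ball hg,
      ← lintegral_const_mul _ (measurable_setLIntegral_ball hg r)]
    exact lintegral_mono h
  rw [mul_left_comm]
  exact (ENNReal.mul_le_iff_le_inv (measure_ball_pos μ 0 one_pos).ne'
    measure_ball_lt_top.ne).1 hball

omit [ProperSpace E] [BorelSpace E] [MeasurableSpace τ] [μ.IsAddHaarMeasure] in
lemma kernelOp_convKernel_indicator_ball {K : E × τ → ℂ} {R : ℝ}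
    (hKR : ∀ v t, R ≤ ‖v‖ → K (v, t) = 0) (f : E → ℂ) {a x : E} (hx : x ∈ ball a 1) (t : τ) :
    kernelOp μ (convKernel K) ((ball a (R + 1)).indicator f) (x, t) =
      kernelOp μ (convKernel K) f (x, t) := by
  refine integral_congr_ae (.of_forall fun y ↦ ?_)
  by_cases hy : y ∈ ball a (R + 1)
  · simp only [indicator_of_mem hy]
  have hR : R ≤ ‖x - y‖ := by
    have := dist_triangle y x a
    rw [mem_ball, not_lt] at hy
    rw [mem_ball] at hx
    rw [← dist_eq_norm, dist_comm]
    linarith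
  simp only [convKernel, hKR _ t hR, zero_mul]

omit [ProperSpace E] [μ.IsAddHaarMeasure] in
lemma setLIntegral_ball_kernelOp_le {K : E × τ → ℂ} {R : ℝ}
    (hKR : ∀ v t, R ≤ ‖v‖ → K (v, t) = 0) {ρ q : ℝ≥0} {s D : ℝ≥0∞} (hq : q ≠ 0)
    (h : HasMixedBound μ ν μ (convKernel K) ρ q s D) {f : E → ℂ} (hf : Measurable f)
    (hf_int : Integrable f μ) (a : E) (hf_mem : MemLp f ρ (μ.restrict (ball a (R + 1)))) :
    ∫⁻ x in ball a 1, eLpNorm (fun t ↦ kernelOp μ (convKernel K) f (x, t)) s ν ^ (q : ℝ) ∂μ ≤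
      (D * eLpNorm f ρ (μ.restrict (ball a (R + 1)))) ^ (q : ℝ) := by
  set fa := (ball a (R + 1)).indicator f
  have hbound := h fa (hf.indicator measurableSet_ball) (hf_int.indicator measurableSet_ball)
    ((memLp_indicator_iff_restrict measurableSet_ball).2 hf_mem)
  rw [eLpNorm_indicator_eq_eLpNorm_restrict measurableSet_ball, eLpMixedNorm,
    eLpNorm_nnreal_eq_lintegral hq] at hbound
  simp only [enorm_eq_self] at hbound
  calc ∫⁻ x in ball a 1, eLpNorm (fun t ↦ kernelOp μ (convKernel K) f (x, t)) s ν ^ (q : ℝ) ∂μ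
      = ∫⁻ x in ball a 1, eLpNorm (fun t ↦ kernelOp μ (convKernel K) fa (x, t)) s ν ^ (q : ℝ) ∂μ :=
        setLIntegral_congr_fun measurableSet_ball fun x hx ↦ by
          simp only [fa, kernelOp_convKernel_indicator_ball hKR f hx]
    _ ≤ ∫⁻ x, eLpNorm (fun t ↦ kernelOp μ (convKernel K) fa (x, t)) s ν ^ (q : ℝ) ∂μ :=
        setLIntegral_le_lintegral _ _
    _ ≤ (D * eLpNorm f ρ (μ.restrict (ball a (R + 1)))) ^ (q : ℝ) := by
        rwa [one_div, ENNReal.rpow_inv_le_iff (by positivity)] at hbound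

lemma setLIntegral_ball_kernelOp_le_of_le {K : E × τ → ℂ} {R : ℝ}
    (hKR : ∀ v t, R ≤ ‖v‖ → K (v, t) = 0) {ρ p q : ℝ≥0} {s D : ℝ≥0∞} (hρ : ρ ≠ 0) (hρp : ρ ≤ p)
    (hpq : p ≤ q) (h : HasMixedBound μ ν μ (convKernel K) ρ q s D) {f : E → ℂ}
    (hf : Measurable f) (hf_int : Integrable f μ) (hf_le : eLpNorm f p μ ≤ 1) (a : E) :
    ∫⁻ x in ball a 1, eLpNorm (fun t ↦ kernelOp μ (convKernel K) f (x, t)) s ν ^ (q : ℝ) ∂μ ≤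
      D ^ (q : ℝ) * μ (ball 0 (R + 1)) ^ (q / ρ - q / p : ℝ) *
        ∫⁻ y in ball a (R + 1), ‖f y‖ₑ ^ (p : ℝ) ∂μ := by
  have hp : p ≠ 0 := (pos_iff_ne_zero.2 hρ |>.trans_le hρp).ne'
  have hq : q ≠ 0 := (pos_iff_ne_zero.2 hp |>.trans_le hpq).ne'
  have hfin : IsFiniteMeasure (μ.restrict (ball a (R + 1))) :=
    isFiniteMeasure_restrict.2 measure_ball_lt_top.ne
  have hf_mem : MemLp f p μ := ⟨hf.aestronglyMeasurable, hf_le.trans_lt ENNReal.one_lt_top⟩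
  refine (setLIntegral_ball_kernelOp_le hKR hq h hf hf_int a
    (hf_mem.restrict _ |>.mono_exponent (ENNReal.coe_le_coe.2 hρp))).trans ?_
  rw [ENNReal.mul_rpow_of_nonneg _ _ q.coe_nonneg, mul_assoc, ← Measure.addHaar_ball_center μ a]
  gcongr
  exact eLpNorm_restrict_rpow_le hf.aestronglyMeasurable hρ hρp hpq
    ((eLpNorm_le_one_iff hp).1 hf_le) _

lemma HasMixedBound.localize {K : E × τ → ℂ} (hK : Measurable K) {R : ℝ}
    (hKR : ∀ v t, R ≤ ‖v‖ → K (v, t) = 0) [SFinite ν] {ρ p q s : ℝ≥0} {D : ℝ≥0∞} (hρ : ρ ≠ 0)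
    (hρp : ρ ≤ p) (hpq : p ≤ q) (hs : s ≠ 0) (h : HasMixedBound μ ν μ (convKernel K) ρ q s D) :
    HasMixedBound μ ν μ (convKernel K) p q s
      (D * ((μ (ball 0 1))⁻¹ * μ (ball 0 (R + 1)) ^ (q / ρ - q / p + 1 : ℝ)) ^ (1 / (q : ℝ))) := by
  have hp : p ≠ 0 := (pos_iff_ne_zero.2 hρ |>.trans_le hρp).ne'
  have hq : q ≠ 0 := (pos_iff_ne_zero.2 hp |>.trans_le hpq).ne'
  have hexp : (0 : ℝ) ≤ q / ρ - q / p := by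
    have hρp' : (ρ : ℝ) ≤ p := by exact_mod_cast hρp
    rw [sub_nonneg]
    gcongr
  refine HasMixedBound.of_unit_ball (by exact_mod_cast hp) hq fun f hf hf_int hf_le ↦ ?_
  set V := μ (ball 0 (R + 1))
  set Φ : E → ℝ≥0∞ := fun x ↦ eLpNorm (fun t ↦ kernelOp μ (convKernel K) f (x, t)) s ν ^ (q : ℝ)
  have hΦ : Measurable Φ :=
    (measurable_eLpNorm_fiber (ν := ν) hs
      (measurable_kernelOp (η := μ) (measurable_convKernel hK) hf)).pow_const _
  have hglobal : ∫⁻ x, Φ x ∂μ ≤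
      D ^ (q : ℝ) * ((μ (ball 0 1))⁻¹ * V ^ (q / ρ - q / p + 1 : ℝ)) := by
    calc ∫⁻ x, Φ x ∂μ ≤ D ^ (q : ℝ) * V ^ (q / ρ - q / p : ℝ) *
          ((μ (ball 0 1))⁻¹ * (V * ∫⁻ y, ‖f y‖ₑ ^ (p : ℝ) ∂μ)) :=
          lintegral_le_of_setLIntegral_ball_le hΦ (by fun_prop)
            (setLIntegral_ball_kernelOp_le_of_le hKR hρ hρp hpq h hf hf_int hf_le)
      _ ≤ D ^ (q : ℝ) * V ^ (q / ρ - q / p : ℝ) * ((μ (ball 0 1))⁻¹ * V) := by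
          gcongr
          exact mul_le_of_le_one_right' ((eLpNorm_le_one_iff hp).1 hf_le)
      _ = D ^ (q : ℝ) * ((μ (ball 0 1))⁻¹ * V ^ (q / ρ - q / p + 1 : ℝ)) := by
          rw [ENNReal.rpow_add_of_nonneg _ _ hexp zero_le_one, ENNReal.rpow_one]
          ring
  rw [eLpMixedNorm, eLpNorm_nnreal_eq_lintegral hq]
  simp only [enorm_eq_self]
  calc (∫⁻ x, Φ x ∂μ) ^ (1 / (q : ℝ))
      ≤ (D ^ (q : ℝ) * ((μ (ball 0 1))⁻¹ * V ^ (q / ρ - q / p + 1 : ℝ))) ^ (1 / (q : ℝ)) := by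
        gcongr
    _ = D * ((μ (ball 0 1))⁻¹ * V ^ (q / ρ - q / p + 1 : ℝ)) ^ (1 / (q : ℝ)) := by
        rw [ENNReal.mul_rpow_of_nonneg _ _ (by positivity), ← ENNReal.rpow_mul,
          mul_one_div_cancel (by positivity), ENNReal.rpow_one]

end Localization

section Tail

variable {E τ : Type*} [NormedAddCommGroup E] [ProperSpace E] [MeasurableSpace E] [BorelSpace E]
  [MeasurableSpace τ] {μ : Measure E} [μ.IsAddHaarMeasure] {ν : Measure τ} {ρ p q s : ℝ≥0}

lemma HasMixedBound.localize_of_tail [SFinite ν] {K : E × τ → ℂ} (hK : Measurable K) {B : ℝ}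
    (hB : ∀ z, ‖K z‖ ≤ B) {R : ℝ} (hρ : 1 ≤ ρ) (hρp : ρ ≤ p) (hpq : p ≤ q) (hs : 1 ≤ s)
    {D D' D'' : ℝ≥0∞} (h : HasMixedBound μ ν μ (convKernel K) ρ q s D)
    (hρ_tail : HasMixedBound μ ν μ (convKernel ({z | R ≤ ‖z.1‖}.indicator K)) ρ q s D')
    (hp_tail : HasMixedBound μ ν μ (convKernel ({z | R ≤ ‖z.1‖}.indicator K)) p q s D'') :
    HasMixedBound μ ν μ (convKernel K) p q s
      ((D + D') * ((μ (ball 0 1))⁻¹ * μ (ball 0 (R + 1)) ^ (q / ρ - q / p + 1 : ℝ)) ^ (1 / (q : ℝ))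
        + D'') := by
  have hρ₀ : ρ ≠ 0 := (one_pos.trans_le hρ).ne'
  have hs₀ : s ≠ 0 := (one_pos.trans_le hs).ne'
  have hq : 1 ≤ (q : ℝ≥0∞) := by exact_mod_cast hρ.trans (hρp.trans hpq)
  set F : Set (E × τ) := {z | R ≤ ‖z.1‖}
  have hF : MeasurableSet F := measurableSet_le measurable_const (by fun_prop)
  have hB_ind (S : Set (E × τ)) (z : E × τ) : ‖S.indicator K z‖ ≤ B :=
    (norm_indicator_le_norm_self K z).trans (hB z)
  have hcore_eq : (fun z ↦ convKernel K z + (-convKernel (F.indicator K)) z) =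
      convKernel (Fᶜ.indicator K) := by
    ext z
    rw [indicator_compl]
    exact (sub_eq_add_neg _ _).symm
  have hsum_eq : (fun z ↦ convKernel (Fᶜ.indicator K) z + convKernel (F.indicator K) z) =
      convKernel K :=
    funext fun z ↦ congrFun (indicator_compl_add_self F K) (z.1.1 - z.2, z.1.2)
  have hcore : HasMixedBound μ ν μ (convKernel (Fᶜ.indicator K)) ρ q s (D + D') := by
    rw [← hcore_eq]
    exact h.add hq hs (measurable_convKernel hK) (measurable_convKernel (hK.indicator hF)).neg
      (fun _ ↦ hB _) (fun _ ↦ (norm_neg _).trans_le (hB_ind F _)) hρ_tail.neg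
  have hcore_zero (v : E) (t : τ) (hv : R ≤ ‖v‖) : Fᶜ.indicator K (v, t) = 0 :=
    indicator_of_notMem (not_not.2 hv) K
  rw [← hsum_eq]
  exact (hcore.localize (hK.indicator hF.compl) hcore_zero hρ₀ hρp hpq hs₀).add hq hs
    (measurable_convKernel (hK.indicator hF.compl)) (measurable_convKernel (hK.indicator hF))
    (fun _ ↦ hB_ind _ _) (fun _ ↦ hB_ind _ _) hp_tail

lemma exists_hasMixedBound_of_decay [IsFiniteMeasure ν] {κ : E → ℝ≥0∞} (hκ : Measurable κ)
    (hκ_le : ∀ v, κ v ≤ 1) (hκ_int : ∫⁻ v, κ v ∂μ ≠ ∞) (R : ℝ) (hρ : 1 ≤ ρ) (hρp : ρ ≤ p)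
    (hpq : p ≤ q) (hs : 1 ≤ s) :
    ∃ A : ℝ≥0, ∀ (K : E × τ → ℂ) (B : ℝ) (c : ℝ≥0) (D : ℝ≥0∞), Measurable K → (∀ z, ‖K z‖ ≤ B) →
      (∀ v t, R ≤ ‖v‖ → ‖K (v, t)‖ₑ ≤ c * κ v) → HasMixedBound μ ν μ (convKernel K) ρ q s D →
      HasMixedBound μ ν μ (convKernel K) p q s (A * (D + c)) := by
  have hp : 1 ≤ p := hρ.trans hρp
  obtain ⟨Tρ, hTρ⟩ := exists_hasMixedBound_convKernel (μ := μ) (ν := ν) hκ hκ_le hκ_int hρ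
    (hρp.trans hpq) s
  obtain ⟨Tp, hTp⟩ := exists_hasMixedBound_convKernel (μ := μ) (ν := ν) hκ hκ_le hκ_int hp hpq s
  set L := ((μ (ball 0 1))⁻¹ * μ (ball 0 (R + 1)) ^ (q / ρ - q / p + 1 : ℝ)) ^ (1 / (q : ℝ))
  have hL : L ≠ ∞ := by
    have hρp' : (ρ : ℝ) ≤ p := by exact_mod_cast hρp
    have hexp : (0 : ℝ) ≤ q / ρ - q / p := by
      rw [sub_nonneg]
      gcongr
    refine ENNReal.rpow_ne_top_of_nonneg (by positivity) (ENNReal.mul_ne_top ?_ ?_)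
    · exact ENNReal.inv_ne_top.2 (measure_ball_pos μ 0 one_pos).ne'
    · exact ENNReal.rpow_ne_top_of_nonneg (by positivity) measure_ball_lt_top.ne
  refine ⟨((Tρ + 1) * L + Tp).toNNReal, fun K B c D hK hB hdecay h ↦ ?_⟩
  have htail (v : E) (t : τ) : ‖{z : E × τ | R ≤ ‖z.1‖}.indicator K (v, t)‖ₑ ≤ c * κ v := by
    by_cases hv : R ≤ ‖v‖
    · exact (enorm_indicator_le_enorm_self _ _).trans (hdecay v t hv)
    · rw [indicator_of_notMem (by exact hv), enorm_zero]
      exact zero_le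
  refine (h.localize_of_tail hK hB hρ hρp hpq hs (hTρ _ c htail) (hTp _ c htail)).mono ?_
  rw [ENNReal.coe_toNNReal (by finiteness)]
  calc (D + c * Tρ) * L + c * Tp ≤ (D + c) * (Tρ + 1) * L + (D + c) * Tp := by
        have hD : D + c * Tρ ≤ (D + c) * (Tρ + 1) := by
          rw [add_mul, mul_add, mul_add, mul_one, mul_one]
          exact add_le_add le_add_self le_self_add
        gcongr
        exact le_add_self
    _ = ((Tρ + 1) * L + Tp) * (D + c) := by ring

end Tail

section PolarCoordinates

variable {E : Type*} [NormedAddCommGroup E] [NormedSpace ℝ E] [FiniteDimensional ℝ E]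
  [Nontrivial E] [MeasurableSpace E] [BorelSpace E]

lemma lintegral_polar (μ : Measure E) [μ.IsAddHaarMeasure] {g : E → ℝ≥0∞} (hg : Measurable g) :
    ∫⁻ t in Ioi (0 : ℝ), ENNReal.ofReal (t ^ (Module.finrank ℝ E - 1)) *
      ∫⁻ w, g (t • w.1) ∂μ.toSphere = ∫⁻ x, g x ∂μ := by
  set G : sphere (0 : E) 1 × Ioi (0 : ℝ) → ℝ≥0∞ := fun z ↦ g (z.2.1 • z.1.1)
  have hG : Measurable G := hg.comp (by fun_prop)
  have hpolar (x : ({0}ᶜ : Set E)) : g x = G (homeomorphUnitSphereProd E x) := by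
    have hx : ‖(x : E)‖ ≠ 0 := norm_ne_zero_iff.2 x.2
    simp only [G, homeomorphUnitSphereProd_apply_fst_coe, homeomorphUnitSphereProd_apply_snd_coe,
      smul_inv_smul₀ hx]
  symm
  calc ∫⁻ x, g x ∂μ = ∫⁻ x : ({0}ᶜ : Set E), g x ∂(μ.comap (↑)) := by
        rw [lintegral_subtype_comap (measurableSet_singleton (0 : E)).compl,
          restrict_compl_singleton]
    _ = ∫⁻ z, G z ∂(μ.toSphere.prod (Measure.volumeIoiPow (Module.finrank ℝ E - 1))) := by
        simp_rw [hpolar]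
        exact μ.measurePreserving_homeomorphUnitSphereProd.lintegral_comp hG
    _ = ∫⁻ t, ∫⁻ w, G (w, t) ∂μ.toSphere ∂(Measure.volumeIoiPow (Module.finrank ℝ E - 1)) :=
        lintegral_prod_symm _ hG.aemeasurable
    _ = ∫⁻ t : Ioi (0 : ℝ), ENNReal.ofReal (t.1 ^ (Module.finrank ℝ E - 1)) *
          ∫⁻ w, g (t.1 • w.1) ∂μ.toSphere ∂(volume.comap Subtype.val) := by
        rw [Measure.volumeIoiPow,
          lintegral_withDensity_eq_lintegral_mul _ (by fun_prop) hG.lintegral_prod_left']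
        rfl
    _ = _ := lintegral_subtype_comap measurableSet_Ioi
        (fun t : ℝ ↦ ENNReal.ofReal (t ^ (Module.finrank ℝ E - 1)) * ∫⁻ w, g (t • w.1) ∂μ.toSphere)

end PolarCoordinates

section FourierMultiplier

open scoped SchwartzMap ContDiff

variable {V : Type*} [NormedAddCommGroup V] [InnerProductSpace ℝ V]

lemma contDiff_radial {b : ℝ → ℝ} (hb : ContDiff ℝ ∞ b) {r c : ℝ} (hr : 0 < r)
    (hbr : ∀ s, |s| < r → b s = c) : ContDiff ℝ ∞ fun ξ : V ↦ (b ‖ξ‖ : ℂ) := by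
  refine Complex.ofRealCLM.contDiff.comp (contDiff_iff_contDiffAt.2 fun ξ ↦ ?_)
  rcases eq_or_ne ξ 0 with rfl | hξ
  · refine (contDiffAt_const (c := c)).congr_of_eventuallyEq ?_
    filter_upwards [ball_mem_nhds (0 : V) hr] with x hx
    exact hbr _ (by simpa using hx)
  · exact hb.contDiffAt.comp _ (contDiffAt_norm ℝ hξ)

lemma hasCompactSupport_radial [FiniteDimensional ℝ V] {b : ℝ → ℝ} {R : ℝ}
    (hbR : ∀ s, R < |s| → b s = 0) :
    HasCompactSupport fun ξ : V ↦ (b ‖ξ‖ : ℂ) := by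
  refine .of_support_subset_isCompact (isCompact_closedBall (0 : V) R) fun x hx ↦ ?_
  by_contra h
  rw [mem_closedBall, dist_zero_right, not_le] at h
  exact hx (by simp only [hbR ‖x‖ (by rwa [abs_norm]), Complex.ofReal_zero])

/-- The dilation `v ↦ s ^ n * ψ (s • v)`, `n = dim V`, which preserves the `L¹` norm. -/
def dilate (s : ℝ) (ψ : V → ℂ) (v : V) : ℂ := ((s ^ Module.finrank ℝ V : ℝ) : ℂ) * ψ (s • v)

lemma norm_dilate_le {ψ : V → ℂ} {A : ℝ} (hψ : ∀ v, ‖v‖ ^ (2 * Module.finrank ℝ V) * ‖ψ v‖ ≤ A)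
    {s : ℝ} (hs : 0 < s) (v : V) :
    ‖v‖ ^ (2 * Module.finrank ℝ V) * ‖dilate s ψ v‖ ≤ A * (s ^ Module.finrank ℝ V)⁻¹ := by
  have hbound := hψ (s • v)
  rw [norm_smul, Real.norm_of_nonneg hs.le] at hbound
  rw [dilate, norm_mul, Complex.norm_real, Real.norm_of_nonneg (by positivity),
    ← div_eq_mul_inv, le_div_iff₀ (by positivity)]
  calc _ = _ := by ring
    _ ≤ A := hbound

variable [FiniteDimensional ℝ V] [MeasurableSpace V] [BorelSpace V]

lemma fourierInv_comp_inv_smul (m : V → ℂ) {s : ℝ} (hs : 0 < s) (v : V) :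
    𝓕⁻ (fun ξ ↦ m (s⁻¹ • ξ)) v = dilate s (𝓕⁻ m) v := by
  have hphase (ξ : V) : inner ℝ ξ v = inner ℝ (s⁻¹ • ξ) (s • v) := by
    rw [real_inner_smul_left, real_inner_smul_right, inv_mul_cancel_left₀ hs.ne']
  simp only [dilate, Real.fourierInv_eq, hphase]
  rw [Measure.integral_comp_inv_smul_of_nonneg volume
    (fun ξ ↦ Real.fourierChar (inner ℝ ξ (s • v)) • m ξ) hs.le, Complex.real_smul]

lemma fourierInv_mul_fourier_eq_integral {m f : V → ℂ} (hm : Integrable m) (hf : Integrable f)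
    (x : V) : 𝓕⁻ (fun ξ ↦ m ξ * 𝓕 f ξ) x = ∫ y, 𝓕⁻ m (x - y) * f y := by
  have hphase (ξ y : V) : inner ℝ ξ (x - y) = inner ℝ ξ x + -inner ℝ y ξ := by
    rw [inner_sub_right, real_inner_comm y ξ, sub_eq_add_neg]
  have hint : Integrable (fun z : V × V ↦
      Real.fourierChar (inner ℝ z.1 (x - z.2)) • (m z.1 * f z.2)) (volume.prod volume) := by
    refine (hm.mul_prod hf).mono (.smul ?_ (hm.mul_prod hf).1) (by simp)
    exact Continuous.aestronglyMeasurable (by fun_prop)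
  calc 𝓕⁻ (fun ξ ↦ m ξ * 𝓕 f ξ) x
      = ∫ ξ, ∫ y, Real.fourierChar (inner ℝ ξ (x - y)) • (m ξ * f y) := by
        rw [Real.fourierInv_eq]
        refine integral_congr_ae (.of_forall fun ξ ↦ ?_)
        simp only [Real.fourier_eq, Circle.smul_def, smul_eq_mul, ← integral_const_mul, hphase,
          AddChar.map_add_eq_mul, Circle.coe_mul]
        exact integral_congr_ae (.of_forall fun y ↦ by ring)
    _ = ∫ y, ∫ ξ, Real.fourierChar (inner ℝ ξ (x - y)) • (m ξ * f y) := integral_integral_swap hint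
    _ = ∫ y, 𝓕⁻ m (x - y) * f y := by
        simp only [Real.fourierInv_eq, Circle.smul_def, smul_eq_mul, ← mul_assoc,
          integral_mul_const]

lemma fourier_eq_zero_of_not_integrable {f : V → ℂ} (hf : ¬ Integrable f) : 𝓕 f = 0 := by
  ext ξ
  rw [Real.fourier_eq]
  exact integral_undef (by rwa [Real.fourierIntegral_convergent_iff])

lemma lintegral_enorm_dilate {ψ : V → ℂ} {s : ℝ} (hs : 0 < s) :
    ∫⁻ v, ‖dilate s ψ v‖ₑ = ∫⁻ v, ‖ψ v‖ₑ := by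
  have hscale : ∫⁻ v, ‖ψ (s • v)‖ₑ =
      ENNReal.ofReal (s ^ Module.finrank ℝ V)⁻¹ * ∫⁻ v, ‖ψ v‖ₑ := by
    calc ∫⁻ v, ‖ψ (s • v)‖ₑ = ∫⁻ v, ‖ψ v‖ₑ ∂(volume.map (s • ·)) :=
          (lintegral_map_equiv (fun v ↦ ‖ψ v‖ₑ) (MeasurableEquiv.smul₀ s hs.ne')).symm
      _ = _ := by
          rw [Measure.map_addHaar_smul _ hs.ne', lintegral_smul_measure, smul_eq_mul,
            abs_of_pos (by positivity)]
  simp only [dilate, enorm_mul]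
  rw [lintegral_const_mul' _ _ enorm_ne_top, hscale, ← mul_assoc, ← ofReal_norm, Complex.norm_real,
    Real.norm_of_nonneg (by positivity), ← ENNReal.ofReal_mul (by positivity),
    mul_inv_cancel₀ (by positivity), ENNReal.ofReal_one, one_mul]

end FourierMultiplier

section LittlewoodPaley

open scoped SchwartzMap ContDiff

variable {d : ℕ} {β₀ : ℝ → ℝ}

lemma betaJ_succ (β₀ : ℝ → ℝ) (j : ℕ) (s : ℝ) :
    betaJ β₀ (j + 1) s = β₀ ((2 ^ (j + 1))⁻¹ * s) - β₀ ((2 ^ j)⁻¹ * s) := by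
  simp only [betaJ, zpow_neg, zpow_natCast]
  norm_cast

lemma betaJ_succ_eq_betaJ_one (β₀ : ℝ → ℝ) (j : ℕ) (s : ℝ) :
    betaJ β₀ (j + 1) s = betaJ β₀ 1 ((2 ^ j)⁻¹ * s) := by
  rw [betaJ_succ, betaJ_succ, ← mul_assoc, ← mul_inv, ← mul_assoc, ← mul_inv]
  ring_nf

lemma contDiff_betaJ (hβ : IsBump β₀) (j : ℕ) : ContDiff ℝ ∞ (betaJ β₀ j) := by
  have hβ_smooth : ContDiff ℝ ∞ β₀ := hβ.1
  cases j with
  | zero => exact hβ_smooth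
  | succ j => exact (hβ_smooth.comp (by fun_prop)).sub (hβ_smooth.comp (by fun_prop))

lemma exists_betaJ_eq_const (hβ : IsBump β₀) (j : ℕ) :
    ∃ c, ∀ s, |s| < 1 / 2 → betaJ β₀ j s = c := by
  cases j with
  | zero => exact ⟨1, hβ.2.1⟩
  | succ j =>
    refine ⟨0, fun s hs ↦ ?_⟩
    have hone (n : ℕ) : β₀ ((2 ^ n)⁻¹ * s) = 1 := by
      refine hβ.2.1 _ (lt_of_le_of_lt ?_ hs)
      rw [abs_mul, abs_of_pos (by positivity)]
      exact mul_le_of_le_one_left (abs_nonneg s) (inv_le_one_of_one_le₀ (one_le_pow₀ one_le_two))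
    rw [betaJ_succ, hone, hone, sub_self]

lemma betaJ_eq_zero (hβ : IsBump β₀) {j : ℕ} {s : ℝ} (hs : 2 ^ j < |s|) : betaJ β₀ j s = 0 := by
  have hzero {n : ℕ} (hn : 2 ^ n < |s|) : β₀ ((2 ^ n)⁻¹ * s) = 0 := by
    refine hβ.2.2 _ ?_
    rwa [abs_mul, abs_of_pos (by positivity), ← div_eq_inv_mul, one_lt_div (by positivity)]
  cases j with
  | zero => exact hβ.2.2 s (by simpa using hs)
  | succ j =>
    have hj : (2 : ℝ) ^ j < |s| := (pow_lt_pow_right₀ one_lt_two j.lt_succ_self).trans hs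
    rw [betaJ_succ, hzero hs, hzero hj, sub_self]

/-- The convolution kernel of `freqLoc`. -/
def lpKernel (d : ℕ) (β₀ : ℝ → ℝ) (j : ℕ) : Euc d → ℂ :=
  𝓕⁻ fun ξ : Euc d ↦ (betaJ β₀ j ‖ξ‖ : ℂ)

lemma contDiff_betaJ_norm (hβ : IsBump β₀) (j : ℕ) :
    ContDiff ℝ ∞ fun ξ : Euc d ↦ (betaJ β₀ j ‖ξ‖ : ℂ) := by
  obtain ⟨c, hc⟩ := exists_betaJ_eq_const hβ j
  exact contDiff_radial (contDiff_betaJ hβ j) one_half_pos hc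

lemma hasCompactSupport_betaJ_norm (hβ : IsBump β₀) (j : ℕ) :
    HasCompactSupport fun ξ : Euc d ↦ (betaJ β₀ j ‖ξ‖ : ℂ) :=
  hasCompactSupport_radial fun _ ↦ betaJ_eq_zero hβ

lemma exists_schwartz_eq_lpKernel (hβ : IsBump β₀) (j : ℕ) :
    ∃ Θ : 𝓢(Euc d, ℂ), ⇑Θ = lpKernel d β₀ j :=
  ⟨𝓕⁻ ((hasCompactSupport_betaJ_norm hβ j).toSchwartzMap (contDiff_betaJ_norm hβ j)),
    SchwartzMap.fourierInv_coe _⟩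

lemma continuous_lpKernel (hβ : IsBump β₀) (j : ℕ) : Continuous (lpKernel d β₀ j) := by
  obtain ⟨Θ, hΘ⟩ := exists_schwartz_eq_lpKernel (d := d) hβ j
  exact hΘ ▸ Θ.continuous

lemma exists_norm_lpKernel_le (hβ : IsBump β₀) (j : ℕ) : ∃ B, ∀ v, ‖lpKernel d β₀ j v‖ ≤ B := by
  obtain ⟨Θ, hΘ⟩ := exists_schwartz_eq_lpKernel (d := d) hβ j
  exact ⟨_, fun v ↦ hΘ ▸ Θ.norm_le_seminorm ℝ v⟩

lemma lpKernel_succ (d : ℕ) (β₀ : ℝ → ℝ) (j : ℕ) :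
    lpKernel d β₀ (j + 1) = dilate (2 ^ j) (lpKernel d β₀ 1) := by
  ext v
  rw [lpKernel, lpKernel, ← fourierInv_comp_inv_smul _ (by positivity)]
  simp only [norm_smul, norm_inv, norm_pow, Real.norm_two, betaJ_succ_eq_betaJ_one β₀ j]

lemma exists_lintegral_enorm_lpKernel_le (d : ℕ) (hβ : IsBump β₀) :
    ∃ P : ℝ≥0, ∀ j, ∫⁻ v, ‖lpKernel d β₀ j v‖ₑ ≤ P := by
  have hfin (j : ℕ) : ∫⁻ v, ‖lpKernel d β₀ j v‖ₑ ≠ ⊤ := by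
    obtain ⟨Θ, hΘ⟩ := exists_schwartz_eq_lpKernel (d := d) hβ j
    exact hΘ ▸ Θ.integrable.2.ne
  refine ⟨(max (∫⁻ v, ‖lpKernel d β₀ 0 v‖ₑ) (∫⁻ v, ‖lpKernel d β₀ 1 v‖ₑ)).toNNReal, fun j ↦ ?_⟩
  rw [ENNReal.coe_toNNReal (max_lt (hfin 0).lt_top (hfin 1).lt_top).ne]
  cases j with
  | zero => exact le_max_left _ _
  | succ j =>
    rw [lpKernel_succ, lintegral_enorm_dilate (by positivity)]
    exact le_max_right _ _

lemma exists_norm_lpKernel_decay (d : ℕ) (hβ : IsBump β₀) :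
    ∃ A : ℝ≥0, ∀ j v, ‖v‖ ^ (2 * d) * ‖lpKernel d β₀ j v‖ ≤ A * (((2 : ℝ) ^ j) ^ d)⁻¹ := by
  have hdecay (j : ℕ) : ∃ A, 0 < A ∧ ∀ v, ‖v‖ ^ (2 * d) * ‖lpKernel d β₀ j v‖ ≤ A := by
    obtain ⟨Θ, hΘ⟩ := exists_schwartz_eq_lpKernel (d := d) hβ j
    simpa only [norm_iteratedFDeriv_zero, hΘ] using Θ.decay (2 * d) 0
  obtain ⟨A₀, hA₀, hA₀_le⟩ := hdecay 0
  obtain ⟨A₁, hA₁, hA₁_le⟩ := hdecay 1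
  refine ⟨(A₀ + A₁ * 2 ^ d).toNNReal, fun j v ↦ ?_⟩
  rw [Real.coe_toNNReal _ (by positivity)]
  cases j with
  | zero =>
    rw [pow_zero, one_pow, inv_one, mul_one]
    exact (hA₀_le v).trans (le_add_of_nonneg_right (by positivity))
  | succ j =>
    calc ‖v‖ ^ (2 * d) * ‖lpKernel d β₀ (j + 1) v‖ ≤ A₁ * (((2 : ℝ) ^ j) ^ d)⁻¹ := by
          have hdil := norm_dilate_le (ψ := lpKernel d β₀ 1) (A := A₁)
            (by simpa only [finrank_euclideanSpace_fin] using hA₁_le)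
            (s := 2 ^ j) (by positivity) v
          rwa [finrank_euclideanSpace_fin, ← lpKernel_succ] at hdil
      _ = A₁ * 2 ^ d * (((2 : ℝ) ^ (j + 1)) ^ d)⁻¹ := by
          rw [pow_succ, mul_pow]
          field_simp
      _ ≤ (A₀ + A₁ * 2 ^ d) * (((2 : ℝ) ^ (j + 1)) ^ d)⁻¹ := by
          gcongr
          exact le_add_of_nonneg_left hA₀.le

lemma freqLoc_eq_integral (hβ : IsBump β₀) (j : ℕ) {f : Euc d → ℂ} (hf : Integrable f)
    (x : Euc d) : freqLoc d β₀ j f x = ∫ y, lpKernel d β₀ j (x - y) * f y :=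
  fourierInv_mul_fourier_eq_integral ((contDiff_betaJ_norm hβ j).continuous
    |>.integrable_of_hasCompactSupport (hasCompactSupport_betaJ_norm hβ j)) hf x

lemma freqLoc_eq_zero_of_not_integrable (β₀ : ℝ → ℝ) (j : ℕ) {f : Euc d → ℂ}
    (hf : ¬ Integrable f) : freqLoc d β₀ j f = 0 := by
  ext x
  rw [freqLoc, fourier_eq_zero_of_not_integrable hf, Real.fourierInv_eq]
  simp only [Pi.zero_apply, mul_zero, smul_zero, integral_zero]

end LittlewoodPaley

section Sphere

variable {d : ℕ} [NeZero d]

instance : IsProbabilityMeasure (sphereMeasure d) where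
  measure_univ := by
    rw [sphereMeasure, Measure.smul_apply,
      Measure.map_apply measurable_subtype_coe MeasurableSet.univ, preimage_univ, smul_eq_mul]
    exact ENNReal.inv_mul_cancel
      (Measure.measure_univ_ne_zero.2 (Measure.toSphere_ne_zero _)) (measure_ne_top _ _)

omit [NeZero d] in
lemma ae_sphereMeasure_norm_eq_one : ∀ᵐ w ∂sphereMeasure d, ‖w‖ = 1 := by
  refine Measure.ae_smul_measure ?_ _
  rw [ae_map_iff measurable_subtype_coe.aemeasurable
    (measurableSet_eq_fun (by fun_prop) (by fun_prop))]
  exact .of_forall fun w ↦ by simp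

omit [NeZero d] in
lemma lintegral_sphereMeasure {g : Euc d → ℝ≥0∞} (hg : Measurable g) :
    ∫⁻ w, g w ∂sphereMeasure d =
      ((volume : Measure (Euc d)).toSphere univ)⁻¹ *
        ∫⁻ w, g w.1 ∂(volume : Measure (Euc d)).toSphere := by
  rw [sphereMeasure, lintegral_smul_measure, lintegral_map hg measurable_subtype_coe, smul_eq_mul]

lemma setLIntegral_Ici_lintegral_sphereMeasure_le {g : Euc d → ℝ≥0∞} (hg : Measurable g) {a : ℝ}
    (ha : 0 < a) (v : Euc d) :
    ∫⁻ t in Ici a, ∫⁻ w, g (v - t • w) ∂sphereMeasure d ≤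
      ((volume : Measure (Euc d)).toSphere univ * ENNReal.ofReal (a ^ (d - 1)))⁻¹ *
        ∫⁻ x, g x := by
  set S := (volume : Measure (Euc d)).toSphere univ
  have hS : S ≠ 0 := Measure.measure_univ_ne_zero.2 (Measure.toSphere_ne_zero _)
  have hS_top : S ≠ ∞ := measure_ne_top _ _
  have ha' : ENNReal.ofReal (a ^ (d - 1)) ≠ 0 := by
    rw [Ne, ENNReal.ofReal_eq_zero, not_le]
    positivity
  rw [← ENNReal.mul_le_iff_le_inv (mul_ne_zero hS ha')
    (ENNReal.mul_ne_top hS_top ENNReal.ofReal_ne_top),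
    ← lintegral_const_mul' _ _ (ENNReal.mul_ne_top hS_top ENNReal.ofReal_ne_top)]
  calc ∫⁻ t in Ici a, S * ENNReal.ofReal (a ^ (d - 1)) *
        ∫⁻ w, g (v - t • w) ∂sphereMeasure d
      ≤ ∫⁻ t in Ici a, ENNReal.ofReal (t ^ (d - 1)) *
          ∫⁻ w, g (v - t • w.1) ∂(volume : Measure (Euc d)).toSphere := by
        refine setLIntegral_mono' measurableSet_Ici fun t ht ↦ ?_
        rw [lintegral_sphereMeasure (g := fun w ↦ g (v - t • w)) (by fun_prop),
          mul_comm S, mul_assoc, ENNReal.mul_inv_cancel_left hS hS_top]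
        gcongr
        exact ht
    _ ≤ ∫⁻ t in Ioi 0, ENNReal.ofReal (t ^ (d - 1)) *
          ∫⁻ w, g (v - t • w.1) ∂(volume : Measure (Euc d)).toSphere :=
        lintegral_mono_set fun t ht ↦ ha.trans_le ht
    _ = ∫⁻ x, g (v - x) := by
        simpa only [finrank_euclideanSpace_fin] using
          lintegral_polar volume (g := fun x ↦ g (v - x)) (by fun_prop)
    _ = ∫⁻ x, g x := lintegral_sub_left_eq_self g v

end Sphere

section SphericalKernel

variable {d : ℕ} {χ : ℝ → ℝ} {B : ℝ≥0} {a b : ℝ} {ψ : Euc d → ℂ}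

/-- A cutoff to times in `[a, b] ⊆ (0, ∞)`, with values in `[-B, B]`. -/
structure IsTimeCutoff (χ : ℝ → ℝ) (B : ℝ≥0) (a b : ℝ) : Prop where
  pos : 0 < a
  measurable : Measurable χ
  norm_le : ∀ t, ‖χ t‖ ≤ B
  eq_zero : ∀ t ∉ Icc a b, χ t = 0

lemma IsCutoff.exists_isTimeCutoff (hχ : IsCutoff χ) : ∃ B, IsTimeCutoff χ B (1 / 2) 4 := by
  obtain ⟨hχ_smooth, -, hχ_supp⟩ := hχ
  obtain ⟨B, hB⟩ := (HasCompactSupport.of_support_subset_isCompact isCompact_Icc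
    hχ_supp).exists_bound_of_continuous hχ_smooth.continuous
  exact ⟨B.toNNReal, by norm_num, hχ_smooth.continuous.measurable,
    fun t ↦ (hB t).trans (Real.le_coe_toNNReal B),
    fun t ht ↦ Function.notMem_support.1 (mt (@hχ_supp t) ht)⟩

/-- The kernel of `f ↦ χ(t) A_t (ψ ∗ f)`, as a convolution in the space variable. -/
def sphericalKernel (χ : ℝ → ℝ) (ψ : Euc d → ℂ) (z : Euc d × ℝ) : ℂ :=
  (χ z.2 : ℂ) * sphAvg ψ z.2 z.1

lemma enorm_sphericalKernel_le (hχ : IsTimeCutoff χ B a b) (ψ : Euc d → ℂ) (z : Euc d × ℝ) :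
    ‖sphericalKernel χ ψ z‖ₑ ≤ B * ∫⁻ w, ‖ψ (z.1 - z.2 • w)‖ₑ ∂sphereMeasure d := by
  rw [sphericalKernel, enorm_mul]
  gcongr
  · rw [← enorm_norm, Complex.norm_real, enorm_norm, enorm_le_coe]
    exact hχ.norm_le _
  · exact enorm_integral_le_lintegral_enorm _

lemma sphericalKernel_eq_zero (hχ : IsTimeCutoff χ B a b) (ψ : Euc d → ℂ) (v : Euc d) {t : ℝ}
    (ht : t ∉ Icc a b) : sphericalKernel χ ψ (v, t) = 0 := by
  simp only [sphericalKernel, hχ.eq_zero t ht, Complex.ofReal_zero, zero_mul]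

variable [NeZero d]

lemma measurable_sphericalKernel (hχ : IsTimeCutoff χ B a b) (hψ : Continuous ψ) :
    Measurable (sphericalKernel χ ψ) := by
  have hχ_meas := hχ.measurable
  have havg : StronglyMeasurable fun z : Euc d × ℝ ↦ sphAvg ψ z.2 z.1 :=
    StronglyMeasurable.integral_prod_right
      (f := fun (z : Euc d × ℝ) w ↦ ψ (z.1 - z.2 • w))
      (Continuous.stronglyMeasurable (by fun_prop))
  exact Measurable.mul (by fun_prop) havg.measurable

lemma norm_sphericalKernel_le (hχ : IsTimeCutoff χ B a b) {P : ℝ} (hψ : ∀ v, ‖ψ v‖ ≤ P)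
    (z : Euc d × ℝ) : ‖sphericalKernel χ ψ z‖ ≤ B * P := by
  rw [sphericalKernel, norm_mul, Complex.norm_real]
  gcongr
  · exact hχ.norm_le _
  · refine (norm_integral_le_of_norm_le_const (.of_forall fun w ↦ hψ _)).trans_eq ?_
    rw [probReal_univ, mul_one]

lemma lintegral_enorm_sphericalKernel_le (hχ : IsTimeCutoff χ B a b) (hψ : Continuous ψ) (t : ℝ) :
    ∫⁻ v, ‖sphericalKernel χ ψ (v, t)‖ₑ ≤ B * ∫⁻ v, ‖ψ v‖ₑ := by
  calc ∫⁻ v, ‖sphericalKernel χ ψ (v, t)‖ₑ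
      ≤ ∫⁻ v, B * ∫⁻ w, ‖ψ (v - t • w)‖ₑ ∂sphereMeasure d :=
        lintegral_mono fun v ↦ enorm_sphericalKernel_le hχ ψ (v, t)
    _ = B * ∫⁻ w, (∫⁻ v, ‖ψ (v - t • w)‖ₑ) ∂sphereMeasure d := by
        rw [lintegral_const_mul' _ _ ENNReal.coe_ne_top, lintegral_lintegral_swap]
        exact Continuous.aemeasurable (by fun_prop)
    _ = B * ∫⁻ _w, (∫⁻ v, ‖ψ v‖ₑ) ∂sphereMeasure d := by
        simp only [lintegral_sub_right_eq_self (fun v ↦ ‖ψ v‖ₑ)]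
    _ = B * ∫⁻ v, ‖ψ v‖ₑ := by rw [lintegral_const, measure_univ, mul_one]

lemma setLIntegral_enorm_sphericalKernel_le (hχ : IsTimeCutoff χ B a b) (hψ : Continuous ψ)
    (v : Euc d) :
    ∫⁻ t in Icc a b, ‖sphericalKernel χ ψ (v, t)‖ₑ ≤
      B * (((volume : Measure (Euc d)).toSphere univ * ENNReal.ofReal (a ^ (d - 1)))⁻¹ *
        ∫⁻ x, ‖ψ x‖ₑ) := by
  calc ∫⁻ t in Icc a b, ‖sphericalKernel χ ψ (v, t)‖ₑ
      ≤ ∫⁻ t in Ici a, B * ∫⁻ w, ‖ψ (v - t • w)‖ₑ ∂sphereMeasure d :=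
        lintegral_mono' (Measure.restrict_mono Icc_subset_Ici_self le_rfl)
          fun t ↦ enorm_sphericalKernel_le hχ ψ (v, t)
    _ = B * ∫⁻ t in Ici a, ∫⁻ w, ‖ψ (v - t • w)‖ₑ ∂sphereMeasure d :=
        lintegral_const_mul' _ _ ENNReal.coe_ne_top
    _ ≤ _ := by
        gcongr
        exact setLIntegral_Ici_lintegral_sphereMeasure_le (g := fun x ↦ ‖ψ x‖ₑ)
          (by fun_prop) hχ.pos v

lemma norm_pow_mul_norm_sphericalKernel_le (hχ : IsTimeCutoff χ B a b) {n : ℕ} {A : ℝ}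
    (hψ : ∀ v, ‖v‖ ^ n * ‖ψ v‖ ≤ A) {v : Euc d} (hv : 2 * b ≤ ‖v‖) (t : ℝ) :
    ‖v‖ ^ n * ‖sphericalKernel χ ψ (v, t)‖ ≤ B * (2 ^ n * A) := by
  have hA : 0 ≤ A := (by positivity : 0 ≤ ‖v‖ ^ n * ‖ψ v‖).trans (hψ v)
  by_cases ht : t ∈ Icc a b
  · have hpt : ∀ᵐ w ∂sphereMeasure d, ‖‖v‖ ^ n * ψ (v - t • w)‖ ≤ 2 ^ n * A := by
      filter_upwards [ae_sphereMeasure_norm_eq_one] with w hw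
      have htw : ‖t • w‖ ≤ b := by
        rw [norm_smul, hw, mul_one, Real.norm_of_nonneg (hχ.pos.le.trans ht.1)]
        exact ht.2
      have hvw : ‖v‖ ≤ 2 * ‖v - t • w‖ := by linarith [norm_sub_norm_le v (t • w)]
      calc ‖‖v‖ ^ n * ψ (v - t • w)‖ = ‖v‖ ^ n * ‖ψ (v - t • w)‖ := by simp
        _ ≤ (2 * ‖v - t • w‖) ^ n * ‖ψ (v - t • w)‖ := by gcongr
        _ = 2 ^ n * (‖v - t • w‖ ^ n * ‖ψ (v - t • w)‖) := by ring
        _ ≤ 2 ^ n * A := by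
            gcongr
            exact hψ _
    have havg : ‖v‖ ^ n * ‖sphAvg ψ t v‖ ≤ 2 ^ n * A := by
      have hint := norm_integral_le_of_norm_le_const hpt
      rw [integral_const_mul, norm_mul, probReal_univ, mul_one] at hint
      simpa only [sphAvg, norm_pow, Complex.norm_real, norm_norm] using hint
    calc ‖v‖ ^ n * ‖sphericalKernel χ ψ (v, t)‖ = ‖χ t‖ * (‖v‖ ^ n * ‖sphAvg ψ t v‖) := by
          rw [sphericalKernel, norm_mul, Complex.norm_real]
          ring
      _ ≤ B * (2 ^ n * A) := by
          gcongr
          exact hχ.norm_le t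
  · rw [sphericalKernel_eq_zero hχ ψ v ht, norm_zero, mul_zero]
    positivity

lemma kernelOp_sphericalKernel (χ : ℝ → ℝ) (hψ : Continuous ψ) {P : ℝ} (hψ_le : ∀ v, ‖ψ v‖ ≤ P)
    {f : Euc d → ℂ} (hf : Integrable f) (x : Euc d) (t : ℝ) :
    kernelOp volume (convKernel (sphericalKernel χ ψ)) f (x, t) =
      χ t * sphAvg (fun u ↦ ∫ y, ψ (u - y) * f y) t x := by
  have hint : Integrable (fun z : Euc d × Euc d ↦ ψ (x - t • z.1 - z.2) * f z.2)
      ((sphereMeasure d).prod volume) :=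
    (hf.comp_snd _).bdd_mul (Continuous.aestronglyMeasurable (by fun_prop))
      (.of_forall fun z ↦ hψ_le _)
  simp only [kernelOp, convKernel, sphericalKernel, sphAvg, mul_assoc, integral_const_mul]
  rw [integral_integral_swap hint]
  simp only [← integral_mul_const, sub_right_comm x]

end SphericalKernel

section TailWeight

variable {E : Type*} [NormedAddCommGroup E]

/-- The weight `(1 + ‖v‖) ^ (-s)`, a bounded majorant of tails that decay of order `s`. -/
def tailWeight (s : ℝ) (v : E) : ℝ≥0∞ := ENNReal.ofReal ((1 + ‖v‖) ^ (-s))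

lemma tailWeight_le_one {s : ℝ} (hs : 0 ≤ s) (v : E) : tailWeight s v ≤ 1 :=
  ENNReal.ofReal_le_one.2 (Real.rpow_le_one_of_one_le_of_nonpos
    (le_add_of_nonneg_right (norm_nonneg v)) (neg_nonpos.2 hs))

lemma measurable_tailWeight [MeasurableSpace E] [BorelSpace E] (s : ℝ) :
    Measurable (tailWeight (E := E) s) := by
  unfold tailWeight
  fun_prop

lemma enorm_le_mul_tailWeight {F : Type*} [NormedAddCommGroup F] {n : ℕ} {A : ℝ≥0} {v : E} {w : F}
    (hv : 1 ≤ ‖v‖) (hw : ‖v‖ ^ n * ‖w‖ ≤ A) :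
    ‖w‖ₑ ≤ (2 ^ n * A : ℝ≥0) * tailWeight n v := by
  rw [tailWeight, Real.rpow_neg (by positivity), Real.rpow_natCast, ← ofReal_norm,
    ← ENNReal.ofReal_coe_nnreal, ← ENNReal.ofReal_mul NNReal.zero_le_coe]
  refine ENNReal.ofReal_le_ofReal ?_
  rw [← div_eq_mul_inv, le_div_iff₀ (by positivity)]
  push_cast
  calc ‖w‖ * (1 + ‖v‖) ^ n ≤ ‖w‖ * (2 * ‖v‖) ^ n := by
        gcongr
        linarith
    _ = 2 ^ n * (‖v‖ ^ n * ‖w‖) := by ring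
    _ ≤ 2 ^ n * A := by gcongr

end TailWeight

section AveragingKernel

variable {d : ℕ} {χ β₀ : ℝ → ℝ} {B : ℝ≥0} {a b : ℝ}

/-- The convolution kernel of the frequency-localized operator `𝒜_j`. -/
def ajKernel (d : ℕ) (χ β₀ : ℝ → ℝ) (j : ℕ) : Euc d × ℝ → ℂ := sphericalKernel χ (lpKernel d β₀ j)

variable [NeZero d]

lemma measurable_ajKernel (hχ : IsTimeCutoff χ B a b) (hβ : IsBump β₀) (j : ℕ) :
    Measurable (ajKernel d χ β₀ j) :=
  measurable_sphericalKernel hχ (continuous_lpKernel hβ j)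

lemma exists_norm_ajKernel_le (hχ : IsTimeCutoff χ B a b) (hβ : IsBump β₀) (j : ℕ) :
    ∃ B' : ℝ, ∀ z, ‖ajKernel d χ β₀ j z‖ ≤ B' := by
  obtain ⟨P, hP⟩ := exists_norm_lpKernel_le (d := d) hβ j
  exact ⟨B * P, norm_sphericalKernel_le hχ hP⟩

lemma exists_lintegral_convKernel_ajKernel_le (d : ℕ) [NeZero d] (hχ : IsTimeCutoff χ B a b)
    (hβ : IsBump β₀) :
    ∃ M : ℝ≥0, ∀ j,
      (∀ x y, ∫⁻ t in Icc a b, ‖convKernel (ajKernel d χ β₀ j) ((x, t), y)‖ₑ ≤ M) ∧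
      ∀ ω, ∫⁻ y, ‖convKernel (ajKernel d χ β₀ j) (ω, y)‖ₑ ≤ M := by
  obtain ⟨P, hP⟩ := exists_lintegral_enorm_lpKernel_le d hβ
  set c := ((volume : Measure (Euc d)).toSphere univ * ENNReal.ofReal (a ^ (d - 1)))⁻¹
  have hc : c ≠ ∞ := by
    refine ENNReal.inv_ne_top.2 (mul_ne_zero
      (Measure.measure_univ_ne_zero.2 (Measure.toSphere_ne_zero _)) ?_)
    rw [Ne, ENNReal.ofReal_eq_zero, not_le]
    exact pow_pos hχ.pos _
  refine ⟨B * (c.toNNReal * P) + B * P, fun j ↦ ⟨fun x y ↦ ?_, fun ω ↦ ?_⟩⟩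
  · calc ∫⁻ t in Icc a b, ‖ajKernel d χ β₀ j (x - y, t)‖ₑ
        ≤ B * (c * ∫⁻ v, ‖lpKernel d β₀ j v‖ₑ) :=
          setLIntegral_enorm_sphericalKernel_le hχ (continuous_lpKernel hβ j) (x - y)
      _ ≤ B * (c * P) := by
          gcongr
          exact hP j
      _ ≤ _ := by
          push_cast
          rw [ENNReal.coe_toNNReal hc]
          exact le_self_add
  · calc ∫⁻ y, ‖ajKernel d χ β₀ j (ω.1 - y, ω.2)‖ₑ
        = ∫⁻ v, ‖ajKernel d χ β₀ j (v, ω.2)‖ₑ :=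
          lintegral_sub_left_eq_self (fun v ↦ ‖ajKernel d χ β₀ j (v, ω.2)‖ₑ) ω.1
      _ ≤ B * ∫⁻ v, ‖lpKernel d β₀ j v‖ₑ :=
          lintegral_enorm_sphericalKernel_le hχ (continuous_lpKernel hβ j) ω.2
      _ ≤ B * P := by
          gcongr
          exact hP j
      _ ≤ _ := by
          push_cast
          exact le_add_self

lemma exists_enorm_ajKernel_decay (d : ℕ) [NeZero d] (hχ : IsTimeCutoff χ B a b)
    (hβ : IsBump β₀) :
    ∃ A : ℝ≥0, ∀ j v t, max (2 * b) 1 ≤ ‖v‖ →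
      ‖ajKernel d χ β₀ j (v, t)‖ₑ ≤
        (A * 2 ^ (-(j * d : ℝ)) : ℝ≥0) * tailWeight (2 * d : ℕ) v := by
  obtain ⟨A, hA⟩ := exists_norm_lpKernel_decay d hβ
  refine ⟨2 ^ (2 * d) * (B * (2 ^ (2 * d) * A)), fun j v t hv ↦ ?_⟩
  have hpow : ((2 : ℝ≥0) ^ (-(j * d : ℝ)) : ℝ≥0) = (((2 : ℝ≥0) ^ j) ^ d)⁻¹ := by
    rw [NNReal.rpow_neg, ← pow_mul, ← NNReal.rpow_natCast, Nat.cast_mul]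
  have hdecay := norm_pow_mul_norm_sphericalKernel_le hχ (hA j) ((le_max_left _ _).trans hv) t
  rw [mul_assoc, hpow]
  refine enorm_le_mul_tailWeight ((le_max_right _ _).trans hv) (hdecay.trans_eq ?_)
  push_cast
  ring

lemma Aj_eq_kernelOp (χ : ℝ → ℝ) (hβ : IsBump β₀) (j : ℕ) {f : Euc d → ℂ} (hf : Integrable f)
    (x : Euc d) (t : ℝ) :
    Aj d χ β₀ j f x t = kernelOp volume (convKernel (ajKernel d χ β₀ j)) f (x, t) := by
  obtain ⟨P, hP⟩ := exists_norm_lpKernel_le (d := d) hβ j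
  rw [ajKernel, kernelOp_sphericalKernel χ (continuous_lpKernel hβ j) hP hf, Aj]
  simp only [sphAvg, freqLoc_eq_integral hβ j hf]

omit [NeZero d] in
lemma Aj_eq_zero_of_not_integrable (χ β₀ : ℝ → ℝ) (j : ℕ) {f : Euc d → ℂ} (hf : ¬ Integrable f) :
    Aj d χ β₀ j f = 0 := by
  ext x t
  simp only [Aj, sphAvg, freqLoc_eq_zero_of_not_integrable β₀ j hf, Pi.zero_apply, integral_zero,
    mul_zero]

end AveragingKernel

section OperatorNorm

lemma lqNorm_eq_eLpNorm {α : Type*} [MeasurableSpace α] {q : ℝ≥0∞} (hq : q ≠ 0) (g : α → ℝ≥0∞)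
    (μ : Measure α) : lqNorm q g μ = eLpNorm g q μ := by
  rcases eq_or_ne q ∞ with rfl | hq_top
  · rw [lqNorm, if_pos rfl, eLpNorm_exponent_top]
    rfl
  · rw [lqNorm, if_neg hq_top, eLpNorm_eq_lintegral_rpow_enorm_toReal hq hq_top]
    rfl

variable {d : ℕ} {χ β₀ : ℝ → ℝ} {B : ℝ≥0} {a b : ℝ}

lemma mixedNorm_eq_eLpMixedNorm {q r : ℝ≥0∞} (hq : q ≠ 0) (hr : r ≠ 0) {T : Set ℝ}
    {F : Euc d × ℝ → ℂ} (hF : ∀ x, ∀ t ∉ T, F (x, t) = 0) :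
    mixedNorm d q r (fun x t ↦ F (x, t)) =
      eLpMixedNorm q r volume (volume.restrict T) F := by
  have hfiber (x : Euc d) : lqNorm r (fun t ↦ (‖F (x, t)‖₊ : ℝ≥0∞)) volume =
      eLpNorm (fun t ↦ F (x, t)) r (volume.restrict T) := by
    rw [lqNorm_eq_eLpNorm hr,
      eLpNorm_restrict_eq_of_support_subset (Function.support_subset_iff'.2 (hF x))]
    simp only [← enorm_eq_nnnorm]
    exact eLpNorm_enorm fun t ↦ F (x, t)
  simp only [mixedNorm, hfiber, lqNorm_eq_eLpNorm hq, eLpMixedNorm]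

variable [NeZero d]

lemma mixedNorm_Aj (hχ : IsTimeCutoff χ B a b) (hβ : IsBump β₀) (j : ℕ) {q r : ℝ≥0∞} (hq : q ≠ 0)
    (hr : r ≠ 0) {f : Euc d → ℂ} (hf : Integrable f) :
    mixedNorm d q r (Aj d χ β₀ j f) = eLpMixedNorm q r volume (volume.restrict (Icc a b))
      (kernelOp volume (convKernel (ajKernel d χ β₀ j)) f) := by
  have hAj : Aj d χ β₀ j f =
      fun x t ↦ kernelOp volume (convKernel (ajKernel d χ β₀ j)) f (x, t) := by
    ext x t
    exact Aj_eq_kernelOp χ hβ j hf x t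
  rw [hAj, mixedNorm_eq_eLpMixedNorm hq hr fun x t ht ↦ ?_]
  simp only [kernelOp, convKernel, ajKernel, sphericalKernel_eq_zero hχ _ _ ht, zero_mul,
    integral_zero]

lemma hasMixedBound_AjOpNorm (hχ : IsTimeCutoff χ B a b) (hβ : IsBump β₀) (j : ℕ) {p : ℝ≥0∞}
    {q r : ℝ≥0} (hp : p ≠ 0) (hq : q ≠ 0) (hr : r ≠ 0) :
    HasMixedBound volume (volume.restrict (Icc a b)) volume (convKernel (ajKernel d χ β₀ j)) p q r
      (AjOpNorm d χ β₀ j p q r) := by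
  refine HasMixedBound.of_unit_ball hp hq fun f _ hfi hf_le ↦ ?_
  rw [← mixedNorm_Aj hχ hβ j (by exact_mod_cast hq) (by exact_mod_cast hr) hfi]
  exact le_iSup₂ (f := fun f (_ : eLpNorm f p volume ≤ 1) ↦ mixedNorm d q r (Aj d χ β₀ j f)) f hf_le

lemma AjOpNorm_le_of_hasMixedBound (hχ : IsTimeCutoff χ B a b) (hβ : IsBump β₀) {j : ℕ}
    {p q r M : ℝ≥0∞} (hq : q ≠ 0) (hr : r ≠ 0)
    (h : HasMixedBound volume (volume.restrict (Icc a b)) volume (convKernel (ajKernel d χ β₀ j))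
      p q r M) : AjOpNorm d χ β₀ j p q r ≤ M := by
  refine iSup₂_le fun f hf_le ↦ ?_
  by_cases hfi : Integrable f
  · obtain ⟨g, hg, hfg⟩ := hfi.1.aemeasurable
    have hg_le : eLpNorm g p volume ≤ 1 := by rwa [← eLpNorm_congr_ae hfg]
    have hop : kernelOp volume (convKernel (ajKernel d χ β₀ j)) f =
        kernelOp volume (convKernel (ajKernel d χ β₀ j)) g := by
      ext ω
      exact integral_congr_ae (hfg.mono fun y hy ↦ by simp only [hy])
    rw [mixedNorm_Aj hχ hβ j hq hr hfi, hop]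
    have hg_mem : MemLp g p volume := ⟨hg.aestronglyMeasurable, hg_le.trans_lt ENNReal.one_lt_top⟩
    exact (h g hg (hfi.congr hfg) hg_mem).trans
      (mul_le_of_le_one_right' hg_le)
  · have hzero : mixedNorm d q r (0 : Euc d → ℝ → ℂ) = 0 :=
      (mixedNorm_eq_eLpMixedNorm (F := 0) hq hr (T := univ) (by simp)).trans
        (by simp [eLpMixedNorm])
    rw [Aj_eq_zero_of_not_integrable χ β₀ j hfi, hzero]
    exact zero_le

end OperatorNorm

lemma lintegral_tailWeight_ne_top (d : ℕ) [NeZero d] :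
    ∫⁻ v : Euc d, tailWeight (2 * d : ℕ) v ≠ ∞ := by
  have hd : 0 < d := NeZero.pos d
  refine (finite_integral_one_add_norm ?_).ne
  rw [finrank_euclideanSpace_fin]
  exact_mod_cast (by lia : d < 2 * d)

section DyadicBound

/-- The estimate `sup_j 2 ^ (j d / q) ‖𝒜_j‖_{L^p → L^q(L^s)} < ∞`, phrased through the convolution
kernels and the time interval `[a, b]` carrying the cutoff. For `q = ∞` the weight is `1`, since
`∞.toReal = 0` and `x / 0 = 0`. -/
def HasDyadicBound (d : ℕ) (χ β₀ : ℝ → ℝ) (a b : ℝ) (p q s : ℝ≥0∞) : Prop :=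
  ∃ D : ℝ≥0, ∀ j : ℕ, HasMixedBound volume (volume.restrict (Icc a b)) volume
    (convKernel (ajKernel d χ β₀ j)) p q s (D * 2 ^ (-(j * d / q.toReal)) : ℝ≥0)

variable {d : ℕ} [NeZero d] {χ β₀ : ℝ → ℝ} {B : ℝ≥0} {a b : ℝ}

lemma le_coe_mul_two_rpow_neg_iff {N : ℝ≥0∞} {D : ℝ≥0} {x : ℝ} :
    N ≤ (D * 2 ^ (-x) : ℝ≥0) ↔ 2 ^ x * N ≤ D := by
  rw [ENNReal.coe_mul, ENNReal.coe_rpow_of_ne_zero two_ne_zero, ENNReal.coe_ofNat,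
    ENNReal.rpow_neg, ← div_eq_mul_inv, mul_comm (2 ^ x)]
  exact ENNReal.le_div_iff_mul_le (.inl (by simp)) (.inl (by simp))

lemma hasDyadicBound_of_AjOpNorm_le (hχ : IsTimeCutoff χ B a b) (hβ : IsBump β₀) {p : ℝ≥0∞}
    {q s C : ℝ≥0} (hp : p ≠ 0) (hq : q ≠ 0) (hs : s ≠ 0)
    (hC : ∀ j : ℕ, (2 : ℝ≥0∞) ^ (j * d / (q : ℝ≥0∞).toReal) * AjOpNorm d χ β₀ j p q s ≤ C) :
    HasDyadicBound d χ β₀ a b p q s :=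
  ⟨C, fun j ↦ (hasMixedBound_AjOpNorm hχ hβ j hp hq hs).mono
    (le_coe_mul_two_rpow_neg_iff.2 (hC j))⟩

namespace HasDyadicBound

lemma exists_AjOpNorm_le {p q s : ℝ≥0∞} (h : HasDyadicBound d χ β₀ a b p q s)
    (hχ : IsTimeCutoff χ B a b) (hβ : IsBump β₀) (hq : q ≠ 0) (hs : s ≠ 0) :
    ∃ C : ℝ≥0, ∀ j : ℕ, (2 : ℝ≥0∞) ^ (j * d / q.toReal) * AjOpNorm d χ β₀ j p q s ≤ C := by
  obtain ⟨D, hD⟩ := h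
  exact ⟨D, fun j ↦ le_coe_mul_two_rpow_neg_iff.1
    (AjOpNorm_le_of_hasMixedBound hχ hβ hq hs (hD j))⟩

lemma mono_inner {p q r s : ℝ≥0∞} (h : HasDyadicBound d χ β₀ a b p q s)
    (hχ : IsTimeCutoff χ B a b) (hβ : IsBump β₀) (hr : r ≠ 0) (hrs : r ≤ s) :
    HasDyadicBound d χ β₀ a b p q r := by
  obtain ⟨D, hD⟩ := h
  set c := (volume.restrict (Icc a b)) univ ^ (1 / r.toReal - 1 / s.toReal)
  have hc : c ≠ ∞ := measure_univ_rpow_ne_top hr hrs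
  refine ⟨c.toNNReal * D, fun j ↦ ?_⟩
  have hk := measurable_convKernel (measurable_ajKernel (d := d) hχ hβ j)
  refine ((hD j).mono_inner hk hr hrs).mono (le_of_eq ?_)
  rw [mul_assoc c.toNNReal, ENNReal.coe_mul c.toNNReal, ENNReal.coe_toNNReal hc]

lemma top_right (hχ : IsTimeCutoff χ B a b) (hβ : IsBump β₀) {p : ℝ≥0∞} (hp : 1 ≤ p) :
    HasDyadicBound d χ β₀ a b p ∞ p := by
  obtain ⟨M, hM⟩ := exists_lintegral_convKernel_ajKernel_le d hχ hβ
  refine ⟨M, fun j ↦ ?_⟩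
  rw [ENNReal.toReal_top, div_zero, neg_zero, NNReal.rpow_zero, mul_one]
  exact HasMixedBound.top_right (measurable_convKernel (measurable_ajKernel hχ hβ j))
    (hM j).1 (hM j).2 hp

lemma interpolate {p₀ q₀ p q : ℝ≥0} (h₀ : HasDyadicBound d χ β₀ a b p₀ q₀ p₀)
    (hχ : IsTimeCutoff χ B a b) (hβ : IsBump β₀) (hp₀ : 1 ≤ p₀) (hq₀ : 1 ≤ q₀) (hq : q₀ ≤ q)
    (hp : p ≠ 0) (hp_le : p ≤ p₀ * q / q₀)
    (hp_upper : (1 / p : ℝ) ≤ (q₀ / q) / p₀ + (1 - q₀ / q)) :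
    HasDyadicBound d χ β₀ a b p q p := by
  obtain ⟨C, hC⟩ := h₀
  obtain ⟨M, hM⟩ := exists_lintegral_convKernel_ajKernel_le d hχ hβ
  have hq₀_pos : 0 < q₀ := zero_lt_one.trans_le hq₀
  have hq_pos : 0 < q := hq₀_pos.trans_le hq
  set lam : ℝ := q₀ / q with hlam
  set u : ℝ := (1 / p - lam / p₀) / (1 - lam)
  have hlam_div : lam / p₀ ≤ 1 / p := by
    refine (one_div_le_one_div_of_le (by positivity) (NNReal.coe_le_coe.2 hp_le)).trans_eq' ?_
    push_cast
    rw [hlam, one_div_div, div_div, mul_comm (p₀ : ℝ)]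
  have hlam_le : lam ≤ 1 := div_le_one_of_le₀ (by exact_mod_cast hq) q.2
  have hu : u ∈ Icc (0 : ℝ) 1 :=
    ⟨div_nonneg (by linarith) (by linarith), div_le_one_of_le₀ (by linarith) (by linarith)⟩
  have hp_eq : (1 / p : ℝ) = lam / p₀ + (1 - lam) * u := by
    rw [mul_div_cancel_of_imp' (fun h ↦ by linarith)]
    ring
  have hq_eq : (1 / q : ℝ) = lam / q₀ := by
    rw [hlam]
    field_simp
  refine ⟨C ^ lam * M ^ (1 - lam), fun j ↦ ?_⟩
  obtain ⟨B', hB'⟩ := exists_norm_ajKernel_le (d := d) hχ hβ j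
  have hinterp := HasMixedBound.interpolate
    (measurable_convKernel (measurable_ajKernel (d := d) hχ hβ j)) (fun z ↦ hB' _) (hM j).1
    (hM j).2 hp₀ hq₀ (hC j) ⟨by positivity, hlam_le⟩ hu hp hq_pos.ne' hp_eq hq_eq
  refine hinterp.mono (le_of_eq ?_)
  have hweight : -(j * d / (q₀ : ℝ)) * lam = -(j * d / q) := by
    rw [hlam]
    field_simp
  rw [ENNReal.coe_toReal, ENNReal.coe_toReal, ← ENNReal.coe_rpow_of_nonneg _ (by positivity),
    ← ENNReal.coe_rpow_of_nonneg _ (sub_nonneg.2 hlam_le), ← ENNReal.coe_mul, NNReal.mul_rpow,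
    ← NNReal.rpow_mul, hweight, mul_right_comm]

lemma of_decay {ρ p q s : ℝ≥0} (h : HasDyadicBound d χ β₀ a b ρ q s)
    (hχ : IsTimeCutoff χ B a b) (hβ : IsBump β₀) (hρ : 1 ≤ ρ) (hρp : ρ ≤ p) (hpq : p ≤ q)
    (hs : 1 ≤ s) :
    HasDyadicBound d χ β₀ a b p q s := by
  obtain ⟨D, hD⟩ := h
  obtain ⟨c, hc⟩ := exists_enorm_ajKernel_decay d hχ hβ
  obtain ⟨A, hA⟩ := exists_hasMixedBound_of_decay (ν := volume.restrict (Icc a b))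
    (measurable_tailWeight (E := Euc d) _) (tailWeight_le_one (Nat.cast_nonneg _))
    (lintegral_tailWeight_ne_top d) (max (2 * b) 1) hρ hρp hpq hs
  refine ⟨A * (D + c), fun j ↦ ?_⟩
  obtain ⟨B', hB'⟩ := exists_norm_ajKernel_le (d := d) hχ hβ j
  refine (hA _ B' _ _ (measurable_ajKernel hχ hβ j) hB' (hc j) (hD j)).mono ?_
  have hq : (1 : ℝ) ≤ q := by exact_mod_cast (hρ.trans hρp).trans hpq
  have hweight : (2 : ℝ≥0) ^ (-(j * d : ℝ)) ≤ 2 ^ (-(j * d / (q : ℝ≥0∞).toReal)) :=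
    NNReal.rpow_le_rpow_of_exponent_le one_le_two
      (neg_le_neg (div_le_self (by positivity) hq))
  rw [mul_assoc A, add_mul D]
  push_cast
  gcongr

/-- For `p ≤ p₀ q / q₀` interpolation with the trivial bound gives the inner exponent `p`. For
larger `p` the inner exponent stays at `p₀ q / q₀`, where locality of the kernel takes over. -/
lemma exists_inner_exponent {p₀ q₀ p q r : ℝ≥0} (h₀ : HasDyadicBound d χ β₀ a b p₀ q₀ p₀)
    (hχ : IsTimeCutoff χ B a b) (hβ : IsBump β₀) (hp₀ : 1 ≤ p₀) (hq₀ : 1 ≤ q₀) (hq : q₀ ≤ q)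
    (hp : p ≠ 0) (hpq : p ≤ q) (hp_upper : (1 / p : ℝ) ≤ (q₀ / q) / p₀ + (1 - q₀ / q))
    (hrp : r ≤ p) (hr : r ≤ p₀ * q / q₀) :
    ∃ s : ℝ≥0, r ≤ s ∧ HasDyadicBound d χ β₀ a b p q s := by
  obtain hp_le | hp_ge := le_total p (p₀ * q / q₀)
  · exact ⟨p, hrp, h₀.interpolate hχ hβ hp₀ hq₀ hq hp hp_le hp_upper⟩
  · have hq₀_pos : 0 < q₀ := zero_lt_one.trans_le hq₀
    set ρ : ℝ≥0 := p₀ * q / q₀ with hρ_def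
    have hρ : 1 ≤ ρ := by
      rw [hρ_def, mul_div_assoc]
      exact one_le_mul hp₀ ((one_le_div hq₀_pos).2 hq)
    have hρ_upper : (1 / ρ : ℝ) ≤ (q₀ / q) / p₀ + (1 - q₀ / q) := by
      have hρ_inv : (1 / ρ : ℝ) = (q₀ / q) / p₀ := by
        rw [hρ_def]
        push_cast
        rw [one_div_div, div_div, mul_comm (p₀ : ℝ)]
      rw [hρ_inv]
      exact le_add_of_nonneg_right
        (sub_nonneg.2 (div_le_one_of_le₀ (by exact_mod_cast hq) q.2))
    have hρ_bound : HasDyadicBound d χ β₀ a b ρ q ρ :=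
      h₀.interpolate hχ hβ hp₀ hq₀ hq (zero_lt_one.trans_le hρ).ne' le_rfl hρ_upper
    exact ⟨ρ, hr, hρ_bound.of_decay hχ hβ hρ hp_ge hpq hρ⟩

end HasDyadicBound

end DyadicBound

section Exponents

lemma one_div_le_of_rhoMin_le {p₀ q₀ p q : ℝ≥0} {ρmin : ℝ≥0∞} (hp₀ : 1 ≤ p₀) (hp : p ≠ 0)
    (hq : q ≠ 0) (hqq : q₀ ≤ q)
    (hρmin : ρmin⁻¹ = 1 - ((q₀ : ℝ≥0∞) / q) * (1 - (p₀ : ℝ≥0∞)⁻¹)) (hρp : ρmin ≤ p) :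
    (1 / p : ℝ) ≤ (q₀ / q) / p₀ + (1 - q₀ / q) := by
  have hp₀_pos : p₀ ≠ 0 := (zero_lt_one.trans_le hp₀).ne'
  have hinv : p⁻¹ ≤ 1 - q₀ / q * (1 - p₀⁻¹) := by
    have h := ENNReal.inv_le_inv.2 hρp
    rw [hρmin] at h
    exact_mod_cast h
  have hp₀_inv : p₀⁻¹ ≤ 1 := inv_le_one_of_one_le₀ hp₀
  have hmul : q₀ / q * (1 - p₀⁻¹) ≤ 1 :=
    mul_le_one' (div_le_one_of_le₀ hqq zero_le) tsub_le_self
  have hreal := NNReal.coe_le_coe.2 hinv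
  rw [NNReal.coe_sub hmul, NNReal.coe_mul, NNReal.coe_sub hp₀_inv] at hreal
  push_cast at hreal
  rw [one_div]
  exact hreal.trans_eq (by ring)

lemma le_of_le_rhoMax {p₀ q₀ q r : ℝ≥0} {ρmax : ℝ≥0∞} (hp₀ : p₀ ≠ 0) (hq₀ : q₀ ≠ 0) (hq : q ≠ 0)
    (hρmax : ρmax⁻¹ = ((q₀ : ℝ≥0∞) / q) * (p₀ : ℝ≥0∞)⁻¹) (hr : r ≤ ρmax) :
    r ≤ p₀ * q / q₀ := by
  have hρmax_eq : ρmax = (p₀ * q / q₀ : ℝ≥0) := by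
    have hdiv : (q₀ / q * p₀⁻¹ : ℝ≥0)⁻¹ = p₀ * q / q₀ := by field_simp
    rw [← inv_inv ρmax, hρmax, ← hdiv, ENNReal.coe_inv (by positivity), ENNReal.coe_mul,
      ENNReal.coe_div hq, ENNReal.coe_inv hp₀]
  rw [hρmax_eq] at hr
  exact_mod_cast hr

end Exponents

theorem interpolation_lemma_general {d : ℕ} [NeZero d] {χ β₀ : ℝ → ℝ} {B : ℝ≥0} {a b : ℝ}
    (hχ : IsTimeCutoff χ B a b) (hβ : IsBump β₀) {p₀ q₀ : ℝ≥0∞} (hp₀ : 1 ≤ p₀) (hp₀q₀ : p₀ ≤ q₀)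
    {C : ℝ≥0}
    (hC : ∀ j : ℕ, (2 : ℝ≥0∞) ^ (j * d / q₀.toReal) * AjOpNorm d χ β₀ j p₀ q₀ p₀ ≤ C)
    {q p r ρmin ρmax : ℝ≥0∞} (hq : q₀ ≤ q) (hρmin : ρmin⁻¹ = 1 - (q₀ / q) * (1 - p₀⁻¹))
    (hρmax : ρmax⁻¹ = (q₀ / q) * p₀⁻¹) (hp : ρmin ≤ p) (hpq : p ≤ q) (hr : 0 < r) (hrp : r ≤ p)
    (hrρ : r ≤ ρmax) :
    ∃ C' : ℝ≥0, ∀ j : ℕ,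
      (2 : ℝ≥0∞) ^ (j * d / q.toReal) * AjOpNorm d χ β₀ j p q r ≤ C' := by
  suffices ∃ s, r ≤ s ∧ HasDyadicBound d χ β₀ a b p q s by
    obtain ⟨s, hrs, hs⟩ := this
    exact (hs.mono_inner hχ hβ hr.ne' hrs).exists_AjOpNorm_le hχ hβ
      (hr.trans_le (hrp.trans hpq)).ne' hr.ne'
  rcases eq_or_ne q ∞ with rfl | hq_top
  · have hρmin_one : ρmin = 1 := by simpa using hρmin
    exact ⟨p, hrp, .top_right hχ hβ (hρmin_one.ge.trans hp)⟩
  lift q to ℝ≥0 using hq_top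
  lift q₀ to ℝ≥0 using ne_top_of_le_ne_top ENNReal.coe_ne_top hq
  lift p₀ to ℝ≥0 using ne_top_of_le_ne_top ENNReal.coe_ne_top hp₀q₀
  lift p to ℝ≥0 using ne_top_of_le_ne_top ENNReal.coe_ne_top hpq
  lift r to ℝ≥0 using ne_top_of_le_ne_top ENNReal.coe_ne_top hrp
  norm_cast at hp₀ hp₀q₀ hq hpq hr hrp
  have hp₀_ne : p₀ ≠ 0 := (zero_lt_one.trans_le hp₀).ne'
  have hq₀_ne : q₀ ≠ 0 := (zero_lt_one.trans_le (hp₀.trans hp₀q₀)).ne'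
  have hq_ne : q ≠ 0 := (zero_lt_one.trans_le (hp₀.trans (hp₀q₀.trans hq))).ne'
  have hp_ne : p ≠ 0 := (hr.trans_le hrp).ne'
  have h₀ := hasDyadicBound_of_AjOpNorm_le hχ hβ (by exact_mod_cast hp₀_ne) hq₀_ne hp₀_ne hC
  obtain ⟨s, hrs, hs⟩ := h₀.exists_inner_exponent hχ hβ hp₀ (hp₀.trans hp₀q₀) hq hp_ne hpq
    (one_div_le_of_rhoMin_le hp₀ hp_ne hq_ne hq hρmin hp) hrp
    (le_of_le_rhoMax hp₀_ne hq₀_ne hq_ne hρmax hrρ)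
  exact ⟨s, by exact_mod_cast hrs, hs⟩

/-- Lemma 4.2 (interpolation): if `2^{jd/q₀} ‖𝒜_j‖_{L^{p₀} → L^{q₀}(L^{p₀})} ≤ C` for
all `j`, `q₀ ≤ q ≤ ∞`, `ρ_min(q) ≤ p ≤ q` and `0 < r ≤ min{p, ρ_max(q)}`, where
`1 - 1/ρ_min(q) = (q₀/q)(1 - 1/p₀)` and `1/ρ_max(q) = (q₀/q)(1/p₀)`, then
`sup_j 2^{jd/q} ‖𝒜_j‖_{L^p → L^q(L^r)} < ∞`. -/
theorem interpolation_lemma (d : ℕ) (hd : 2 ≤ d) (χ β₀ : ℝ → ℝ)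
    (hχ : IsCutoff χ) (hβ : IsBump β₀)
    (p₀ q₀ : ℝ≥0∞) (hp₀ : 1 ≤ p₀) (hp₀q₀ : p₀ ≤ q₀)
    (C : ℝ≥0)
    (hC : ∀ j : ℕ, (2 : ℝ≥0∞) ^ (((j : ℝ) * d) / q₀.toReal) *
      AjOpNorm d χ β₀ j p₀ q₀ p₀ ≤ C)
    (q p r ρmin ρmax : ℝ≥0∞) (hq : q₀ ≤ q)
    (hρmin : ρmin⁻¹ = 1 - (q₀ / q) * (1 - p₀⁻¹))
    (hρmax : ρmax⁻¹ = (q₀ / q) * p₀⁻¹)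
    (hp1 : ρmin ≤ p) (hp2 : p ≤ q) (hr0 : 0 < r) (hr1 : r ≤ p) (hr2 : r ≤ ρmax) :
    ∃ C' : ℝ≥0, ∀ j : ℕ,
      (2 : ℝ≥0∞) ^ (((j : ℝ) * d) / q.toReal) * AjOpNorm d χ β₀ j p q r ≤ C' := by
  have : NeZero d := ⟨by lia⟩
  obtain ⟨B, hχ⟩ := hχ.exists_isTimeCutoff
  exact interpolation_lemma_general hχ hβ hp₀ hp₀q₀ hC hq hρmin hρmax hp1 hp2 hr0 hr1 hr2
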